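/- arXiv:1506.07741 — 3 statements merged into one kernel-verified Lean document; each statement's English description precedes it below -/
import Mathlib

section
/- Let n, k, a and r be positive integers and let w be a vertex of T^{n,k,a} that is neither the root of T^{n,k,a} nor a leaf. Then there exists a leaf y of T^{n,k,a} such that |I^(r)_y(T^{n,k,a})| ≥ |I^(r)_w(T^{n,k,a})|. -/
open Finset SimpleGraph
open scoped Classical

variable {V : Type*}

/-- The finset of independent sets of a finite graph `G`. -/
noncomputable def indepSets [Fintype V] (G : SimpleGraph V) : Finset (Finset V) :=
  univ.filter fun A => ∀ x ∈ A, ∀ y ∈ A, ¬ G.Adj x y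

/-- The finset of independent sets of size `r` of `G`, i.e. `I^(r)(G)`. -/
noncomputable def indepSetsSize [Fintype V] (G : SimpleGraph V) (r : ℕ) : Finset (Finset V) :=
  (indepSets G).filter fun A => A.card = r

/-- The `r`-star centred at `v`: independent sets of size `r` containing `v`. -/
noncomputable def ekrStar [Fintype V] (G : SimpleGraph V) (r : ℕ) (v : V) : Finset (Finset V) :=
  (indepSetsSize G r).filter fun A => v ∈ A

/-- The `(k,a)`-claw: an elongated claw with `k` limbs each of length `a`.  The vertex
`none` is the root and `some (i, j)` is the vertex of limb `i` at distance `j + 1` from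
the root (so `some (i, a − 1)` is the leaf of limb `i`). -/
def kaClaw (k a : ℕ) : SimpleGraph (Option (Fin k × Fin a)) :=
  SimpleGraph.fromRel (fun x y =>
    (∃ i : Fin k, ∃ j : Fin a, x = none ∧ y = some (i, j) ∧ (j : ℕ) = 0) ∨
    (∃ (i : Fin k) (j j' : Fin a), x = some (i, j) ∧ y = some (i, j') ∧ (j' : ℕ) = (j : ℕ) + 1))

/-- The tree `T^{n,k,a}`: `n` disjoint `(k,a)`-claws together with one further vertex
(`none`, the root of `T^{n,k,a}`) joined by an edge to the root of each `(k,a)`-claw. -/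
def superClaw (n k a : ℕ) : SimpleGraph (Option (Fin n × Option (Fin k × Fin a))) :=
  SimpleGraph.fromRel (fun x y =>
    (∃ m : Fin n, x = none ∧ y = some (m, none)) ∨
    (∃ (m : Fin n) (u w : Option (Fin k × Fin a)),
      x = some (m, u) ∧ y = some (m, w) ∧ (kaClaw k a).Adj u w))

theorem star_le_of_flip {V : Type*} [Fintype V] (G : SimpleGraph V) (r : ℕ) (w y : V) (σ : V → V)
    (hσ : ∀ x, σ (σ x) = x) (hw : σ w = y)
    (h : ∀ u v, G.Adj u v → G.Adj (σ u) (σ v) ∨ G.Adj w (σ u) ∨ G.Adj w (σ v)) :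
    (ekrStar G r w).card ≤ (ekrStar G r y).card := by
  have hinj : Function.Injective σ := fun p q e => by rw [← hσ p, e, hσ]
  refine Finset.card_le_card_of_injOn (fun A => A.image σ) ?_ ?_
  · intro A hA
    simp only [ekrStar, indepSetsSize, indepSets, Finset.coe_filter, Finset.mem_filter,
      Finset.mem_univ, true_and, Set.mem_setOf_eq] at hA ⊢
    obtain ⟨⟨hI, hc⟩, hwA⟩ := hA
    refine ⟨⟨?_, ?_⟩, ?_⟩
    · intro u hu v hv huv
      obtain ⟨u', hu', rfl⟩ := Finset.mem_image.1 hu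
      obtain ⟨v', hv', rfl⟩ := Finset.mem_image.1 hv
      have := h _ _ huv
      simp only [hσ] at this
      rcases this with h1 | h1 | h1
      · exact hI _ hu' _ hv' h1
      · exact hI _ hwA _ hu' h1
      · exact hI _ hwA _ hv' h1
    · rw [Finset.card_image_of_injective _ hinj, hc]
    · exact Finset.mem_image.2 ⟨w, hwA, hw⟩
  · intro A _ B _ e
    exact Finset.image_injective hinj e

theorem ka_none_some {k a : ℕ} (i : Fin k) (j : Fin a) :
    (kaClaw k a).Adj none (some (i, j)) ↔ (j : ℕ) = 0 := by
  simp [kaClaw]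

theorem ka_some_some {k a : ℕ} (i i' : Fin k) (j j' : Fin a) :
    (kaClaw k a).Adj (some (i, j)) (some (i', j')) ↔
      i = i' ∧ ((j' : ℕ) = j + 1 ∨ (j : ℕ) = j' + 1) := by
  simp only [kaClaw, SimpleGraph.fromRel_adj]
  constructor
  · rintro ⟨_, h⟩
    simp at h
    grind
  · rintro ⟨rfl, h⟩
    refine ⟨?_, ?_⟩
    · intro e
      simp at e
      subst e
      omega
    · simp
      grind

theorem sc_none_some {n k a : ℕ} (m : Fin n) (u : Option (Fin k × Fin a)) :
    (superClaw n k a).Adj none (some (m, u)) ↔ u = none := by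
  simp [superClaw]

theorem sc_some_some {n k a : ℕ} (m m' : Fin n) (u u' : Option (Fin k × Fin a)) :
    (superClaw n k a).Adj (some (m, u)) (some (m', u')) ↔ m = m' ∧ (kaClaw k a).Adj u u' := by
  simp only [superClaw, SimpleGraph.fromRel_adj]
  constructor
  · rintro ⟨_, h⟩
    simp at h
    rcases h with ⟨h, h'⟩ | ⟨h, h'⟩
    · exact ⟨h.symm, h'⟩
    · exact ⟨h, h'.symm⟩
  · rintro ⟨rfl, h⟩
    refine ⟨?_, ?_⟩
    · intro e
      simp at e
      exact h.ne e
    · simp [h]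

/-- The vertex at position `q` of limb `i`. -/
def vtx {k a : ℕ} (i : Fin k) (q : ℕ) : Option (Fin k × Fin a) :=
  if h : 0 < q ∧ q ≤ a then some (i, ⟨q - 1, by omega⟩) else none

/-- Reverse positions `p, …, a` of limb `i`. -/
noncomputable def tau {k a : ℕ} (i : Fin k) (p : ℕ) :
    Option (Fin k × Fin a) → Option (Fin k × Fin a)
  | none => if p = 0 then vtx i a else none
  | some (i', j) => if i' = i ∧ p ≤ j + 1 then vtx i (p + a - (j + 1)) else some (i', j)

theorem tau_tau {k a : ℕ} (ha : 0 < a) (i : Fin k) (p : ℕ) (hp : p ≤ a)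
    (u : Option (Fin k × Fin a)) : tau i p (tau i p u) = u := by
  rcases u with _ | ⟨i', j, hj⟩
  · by_cases h : p = 0
    · simp [tau, vtx, h, ha]
      omega
    · simp [tau, h]
  · by_cases h : i' = i ∧ p ≤ j + 1
    · obtain ⟨rfl, h⟩ := h
      by_cases h0 : p + a - (j + 1) = 0
      · have : p = 0 := by omega
        subst this
        have : j + 1 = a := by omega
        subst this
        simp [tau, vtx]
      · have h1 : 0 < p + a - (j + 1) ∧ p + a - (j + 1) ≤ a := by omega
        have h2 : p ≤ p + a - (j + 1) - 1 + 1 := by omega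
        have h3 : 0 < p + a - (p + a - (j + 1) - 1 + 1) ∧
          p + a - (p + a - (j + 1) - 1 + 1) ≤ a := by omega
        simp only [tau, h, vtx, h1, h2, h3, true_and, and_self, if_true, dif_pos]
        simp
        omega
    · simp [tau, h]

theorem vtx_zero {k a : ℕ} (i : Fin k) : (vtx i 0 : Option (Fin k × Fin a)) = none := by
  simp [vtx]

theorem vtx_adj {k a : ℕ} (i : Fin k) (s t : ℕ) (hs : s ≤ a) (ht : t ≤ a)
    (h : t = s + 1 ∨ s = t + 1) : (kaClaw k a).Adj (vtx i s) (vtx i t) := by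
  by_cases h0 : s = 0
  · subst h0
    have h1 : 0 < t ∧ t ≤ a := by omega
    rw [vtx_zero, vtx, dif_pos h1, ka_none_some]
    simp; omega
  · by_cases h0' : t = 0
    · subst h0'
      have h1 : 0 < s ∧ s ≤ a := by omega
      rw [vtx_zero, vtx, dif_pos h1, SimpleGraph.adj_comm, ka_none_some]
      simp; omega
    · have h1 : 0 < t ∧ t ≤ a := by omega
      have h2 : 0 < s ∧ s ≤ a := by omega
      rw [vtx, dif_pos h2, vtx, dif_pos h1, ka_some_some]
      simp; omega

theorem some_eq_vtx {k a : ℕ} (i : Fin k) (j : Fin a) : some (i, j) = vtx i ((j : ℕ) + 1) := by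
  have : 0 < (j : ℕ) + 1 ∧ (j : ℕ) + 1 ≤ a := by omega
  simp [vtx]

theorem tau_vtx {k a : ℕ} (i : Fin k) (p q : ℕ) (hq : q ≤ a) (hpq : p ≤ q) :
    tau i p (vtx i q : Option (Fin k × Fin a)) = vtx i (p + a - q) := by
  by_cases h : q = 0
  · subst h
    have : p = 0 := by omega
    subst this
    simp [vtx_zero, tau]
  · have h1 : 0 < q ∧ q ≤ a := by omega
    have h2 : q - 1 + 1 = q := by omega
    rw [vtx, dif_pos h1]
    simp [tau, h2, hpq]

theorem tau_vtx_lt {k a : ℕ} (i : Fin k) (p q : ℕ) (hq : q ≤ a) (hpq : q < p) :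
    tau i p (vtx i q : Option (Fin k × Fin a)) = vtx i q := by
  by_cases h : q = 0
  · subst h
    have : p ≠ 0 := by omega
    simp [vtx_zero, tau, this]
  · have h1 : 0 < q ∧ q ≤ a := by omega
    have h2 : ¬ p ≤ q - 1 + 1 := by omega
    rw [vtx, dif_pos h1]
    simp only [tau, h2, and_false, if_false]

theorem tau_other {k a : ℕ} (i i' : Fin k) (hi : i' ≠ i) (p : ℕ) (j : Fin a) :
    tau i p (some (i', j)) = some (i', j) := by
  simp [tau, hi]

theorem ka_adj_cases {k a : ℕ} {u v : Option (Fin k × Fin a)} (h : (kaClaw k a).Adj u v) :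
    ∃ (i : Fin k) (s : ℕ), s + 1 ≤ a ∧
      ((u = vtx i s ∧ v = vtx i (s + 1)) ∨ (v = vtx i s ∧ u = vtx i (s + 1))) := by
  rcases u with _ | ⟨i, j⟩ <;> rcases v with _ | ⟨i', j'⟩
  · exact absurd rfl h.ne
  · rw [ka_none_some] at h
    exact ⟨i', 0, by omega, Or.inl ⟨(vtx_zero _).symm, by rw [some_eq_vtx, h]⟩⟩
  · rw [SimpleGraph.adj_comm, ka_none_some] at h
    exact ⟨i, 0, by omega, Or.inr ⟨(vtx_zero _).symm, by rw [some_eq_vtx, h]⟩⟩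
  · rw [ka_some_some] at h
    obtain ⟨rfl, h | h⟩ := h
    · exact ⟨i, j + 1, by omega, Or.inl ⟨some_eq_vtx _ _, by rw [some_eq_vtx, h]⟩⟩
    · exact ⟨i, j' + 1, by omega, Or.inr ⟨some_eq_vtx _ _, by rw [some_eq_vtx, h]⟩⟩

theorem tau_adj_aux {k a : ℕ} (i i' : Fin k) (p s : ℕ) (hp : p ≤ a) (hs : s + 1 ≤ a) :
    (kaClaw k a).Adj (tau i p (vtx i' s)) (tau i p (vtx i' (s + 1))) ∨
    (kaClaw k a).Adj (vtx i p) (tau i p (vtx i' s)) ∨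
    (kaClaw k a).Adj (vtx i p) (tau i p (vtx i' (s + 1))) := by
  by_cases hi : i' = i
  · subst hi
    rcases lt_trichotomy (s + 1) p with h | h | h
    · left
      rw [tau_vtx_lt _ _ _ (by omega) (by omega), tau_vtx_lt _ _ _ (by omega) (by omega)]
      exact vtx_adj _ _ _ (by omega) (by omega) (by omega)
    · right; left
      rw [tau_vtx_lt _ _ _ (by omega) (by omega)]
      exact vtx_adj _ _ _ (by omega) (by omega) (by omega)
    · left
      rw [tau_vtx _ _ _ (by omega) (by omega), tau_vtx _ _ _ (by omega) (by omega)]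
      exact vtx_adj _ _ _ (by omega) (by omega) (by omega)
  · have e1 : tau i p (vtx i' (s + 1) : Option (Fin k × Fin a)) = vtx i' (s + 1) := by
      have := tau_other i i' hi p (⟨s, by omega⟩ : Fin a)
      rwa [some_eq_vtx] at this
    rw [e1]
    by_cases h0 : s = 0
    · subst h0
      by_cases hp0 : p = 0
      · subst hp0
        right; right
        have := vtx_adj i' 0 (0 + 1) (by omega) hs (by omega)
        rw [vtx_zero] at this ⊢
        exact this
      · left
        have := vtx_adj i' 0 (0 + 1) (by omega) hs (by omega)
        rw [vtx_zero] at this ⊢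
        simpa [tau, hp0] using this
    · left
      have e2 : tau i p (vtx i' s : Option (Fin k × Fin a)) = vtx i' s := by
        have := tau_other i i' hi p (⟨s - 1, by omega⟩ : Fin a)
        rw [some_eq_vtx] at this
        simpa [show s - 1 + 1 = s by omega] using this
      rw [e2]
      exact vtx_adj _ _ _ (by omega) (by omega) (by omega)

theorem tau_adj {k a : ℕ} (i : Fin k) (p : ℕ) (hp : p ≤ a) (u v : Option (Fin k × Fin a))
    (h : (kaClaw k a).Adj u v) :
    (kaClaw k a).Adj (tau i p u) (tau i p v) ∨
    (kaClaw k a).Adj (vtx i p) (tau i p u) ∨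
    (kaClaw k a).Adj (vtx i p) (tau i p v) := by
  obtain ⟨i', s, hs, ⟨rfl, rfl⟩ | ⟨rfl, rfl⟩⟩ := ka_adj_cases h
  · exact tau_adj_aux i i' p s hp hs
  · rcases tau_adj_aux i i' p s hp hs with h | h | h
    · exact Or.inl h.symm
    · exact Or.inr (Or.inr h)
    · exact Or.inr (Or.inl h)

/-- The flip on the whole tree. -/
noncomputable def sig {n k a : ℕ} (m : Fin n) (i : Fin k) (p : ℕ) :
    Option (Fin n × Option (Fin k × Fin a)) → Option (Fin n × Option (Fin k × Fin a))
  | none => none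
  | some (m', u) => if m' = m then some (m', tau i p u) else some (m', u)

theorem sig_adj_none {n k a : ℕ} (m : Fin n) (i : Fin k) (p : ℕ) (m' : Fin n) :
    (superClaw n k a).Adj none (sig m i p (some (m', none))) ∨
    (superClaw n k a).Adj (some (m, vtx i p)) none := by
  by_cases hm : m' = m
  · subst hm
    by_cases hp : p = 0
    · right
      rw [SimpleGraph.adj_comm, sc_none_some, hp, vtx_zero]
    · left
      simp [sig, tau, hp, sc_none_some]
  · left
    simp [sig, hm, sc_none_some]

theorem star_le_leaf {n k a : ℕ} (r : ℕ) (ha : 0 < a) (m : Fin n) (i : Fin k) (p : ℕ)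
    (hp : p ≤ a) :
    (ekrStar (superClaw n k a) r (some (m, vtx i p))).card ≤
      (ekrStar (superClaw n k a) r (some (m, vtx i a))).card := by
  refine star_le_of_flip _ r _ _ (sig m i p) ?_ ?_ ?_
  · rintro (_ | ⟨m', u⟩)
    · rfl
    · by_cases hm : m' = m
      · simp [sig, hm, tau_tau ha i p hp]
      · simp [sig, hm]
  · simp [sig, tau_vtx i p p hp le_rfl]
  · rintro (_ | ⟨m1, u⟩) (_ | ⟨m2, v⟩) h
    · exact absurd rfl h.ne
    · rw [sc_none_some] at h
      subst h
      rcases sig_adj_none (a := a) m i p m2 with h | h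
      · exact Or.inl h
      · exact Or.inr (Or.inl h)
    · rw [SimpleGraph.adj_comm, sc_none_some] at h
      subst h
      rcases sig_adj_none (a := a) m i p m1 with h | h
      · exact Or.inl h.symm
      · exact Or.inr (Or.inr h)
    · rw [sc_some_some] at h
      obtain ⟨rfl, h⟩ := h
      by_cases hm : m1 = m
      · subst hm
        simpa [sig, sc_some_some] using tau_adj i p hp u v h
      · left
        simpa [sig, hm, sc_some_some] using h

theorem leaf_degree {n k a : ℕ} (ha : 0 < a) (m : Fin n) (i : Fin k) :
    (superClaw n k a).degree (some (m, vtx i a)) = 1 := by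
  rw [SimpleGraph.degree_eq_one_iff_existsUnique_adj]
  have e : (vtx i a : Option (Fin k × Fin a)) = some (i, ⟨a - 1, by omega⟩) := by
    simp [vtx, ha]
  refine ⟨some (m, vtx i (a - 1)), ?_, ?_⟩
  · show (superClaw n k a).Adj _ _
    rw [sc_some_some]
    exact ⟨rfl, vtx_adj _ _ _ le_rfl (by omega) (by omega)⟩
  · rintro (_ | ⟨m', u⟩) h
    · rw [SimpleGraph.adj_comm, sc_none_some, e] at h
      cases h
    · rw [sc_some_some, e] at h
      obtain ⟨rfl, h⟩ := h
      rcases u with _ | ⟨i', j⟩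
      · rw [SimpleGraph.adj_comm, ka_none_some] at h
        simp only at h
        rw [h, vtx_zero]
      · rw [ka_some_some] at h
        obtain ⟨rfl, h⟩ := h
        have h' : (j : ℕ) + 1 = a - 1 := by
          have := j.2
          simp only at h
          omega
        rw [some_eq_vtx, h']

/-- If `w` is a vertex of `T^{n,k,a}` that is neither the root nor a
leaf, then some leaf `y` satisfies `|I^(r)_y(T^{n,k,a})| ≥ |I^(r)_w(T^{n,k,a})|`. -/
theorem superClaw_leaf_star_ge (n k a r : ℕ) (hn : 0 < n) (hk : 0 < k) (ha : 0 < a)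
    (hr : 0 < r) (w : Option (Fin n × Option (Fin k × Fin a)))
    (hroot : w ≠ none) (hleaf : (superClaw n k a).degree w ≠ 1) :
    ∃ y, (superClaw n k a).degree y = 1 ∧
      (ekrStar (superClaw n k a) r w).card ≤ (ekrStar (superClaw n k a) r y).card := by
  rcases w with _ | ⟨m, u⟩
  · exact absurd rfl hroot
  · rcases u with _ | ⟨i, j⟩
    · refine ⟨some (m, vtx ⟨0, hk⟩ a), leaf_degree ha _ _, ?_⟩
      have := star_le_leaf r ha m (⟨0, hk⟩ : Fin k) 0 (Nat.zero_le a)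
      rwa [vtx_zero] at this
    · refine ⟨some (m, vtx i a), leaf_degree ha _ _, ?_⟩
      rw [some_eq_vtx]
      exact star_le_leaf r ha m i _ j.2
end

section
/- Let n, r and t be positive integers with n ≥ r and t ≥ 2, and let G be the disjoint union of n copies of the complete graph K_t. Then G is r-EKR, and G is strictly r-EKR unless r = n and t = 2. -/
open Finset SimpleGraph
open scoped Classical

variable {V : Type*}

/-- A family of sets is pairwise intersecting. -/
def PairwiseIntersecting (𝒜 : Finset (Finset V)) : Prop :=
  ∀ A ∈ 𝒜, ∀ B ∈ 𝒜, (A ∩ B).Nonempty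

/-- `G` is `r`-EKR: no pairwise intersecting subfamily of `I^(r)(G)` is larger than the
largest `r`-star. -/
def IsEKR [Fintype V] (G : SimpleGraph V) (r : ℕ) : Prop :=
  ∀ 𝒜 ⊆ indepSetsSize G r, PairwiseIntersecting 𝒜 → ∃ v, 𝒜.card ≤ (ekrStar G r v).card

/-- `G` is strictly `r`-EKR: `r`-EKR, and every maximum-size pairwise intersecting
subfamily of `I^(r)(G)` is an `r`-star. -/
def IsStrictEKR [Fintype V] (G : SimpleGraph V) (r : ℕ) : Prop :=
  IsEKR G r ∧ ∀ 𝒜 ⊆ indepSetsSize G r, PairwiseIntersecting 𝒜 →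
    (∀ ℬ ⊆ indepSetsSize G r, PairwiseIntersecting ℬ → ℬ.card ≤ 𝒜.card) →
    ∃ v, 𝒜 = ekrStar G r v

/-- The disjoint union of `m` copies of the graph `H`. -/
def copies (m : ℕ) {W : Type*} (H : SimpleGraph W) : SimpleGraph (Fin m × W) where
  Adj := fun x y => x.1 = y.1 ∧ H.Adj x.2 y.2
  symm := ⟨fun _ _ h => ⟨h.1.symm, h.2.symm⟩⟩
  loopless := ⟨fun x h => H.loopless.irrefl x.2 h.2⟩

def prt (n : ℕ) {m : ℕ} (x : ZMod m) : ℕ := x.val % n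

def Wd (m r : ℕ) (k : ZMod m) : Finset (ZMod m) :=
  (Finset.range r).image (fun i : ℕ => k + (i : ZMod m))

lemma mem_Wd {m r : ℕ} {k x : ZMod m} : x ∈ Wd m r k ↔ ∃ i < r, k + (i : ZMod m) = x := by
  simp [Wd]

lemma cast_inj_small {m : ℕ} {a b : ℕ} (h : (a : ZMod m) = b) (hab : a ≤ b) (hb : b < a + m) :
    a = b := by
  rw [ZMod.natCast_eq_natCast_iff] at h
  have := (Nat.modEq_iff_dvd' hab).1 h
  have := Nat.eq_zero_of_dvd_of_lt this (by omega)
  omega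

lemma Wd_in {m r k x : ℕ} (h1 : k ≤ x) (h2 : x < k + r) : (x : ZMod m) ∈ Wd m r (k : ZMod m) := by
  rw [mem_Wd]
  refine ⟨x - k, by omega, ?_⟩
  rw [← Nat.cast_add]; congr 1; omega

lemma Wd_out {m r k x : ℕ} (h1 : k + r ≤ x) (h2 : x < m + k) :
    (x : ZMod m) ∉ Wd m r (k : ZMod m) := by
  rw [mem_Wd]
  rintro ⟨i, hi, h⟩
  rw [← Nat.cast_add] at h
  have := cast_inj_small h (by omega) (by omega)
  omega

lemma Wd_card {m r : ℕ} (hr : r ≤ m) (k : ZMod m) : (Wd m r k).card = r := by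
  rw [Wd, Finset.card_image_of_injOn, Finset.card_range]
  intro a ha b hb h
  simp only [Finset.coe_range, Set.mem_Iio] at ha hb
  have h' : (a : ZMod m) = b := add_left_cancel h
  rcases le_total a b with hab | hab
  · exact cast_inj_small h' hab (by omega)
  · exact (cast_inj_small h'.symm hab (by omega)).symm

section kat
variable {m r : ℕ} {S : Finset (ZMod m)}

lemma kat_far (hS : ∀ x ∈ S, ∀ y ∈ S, (Wd m r x ∩ Wd m r y).Nonempty) {d : ℕ} (h1 : r ≤ d)
    (h2 : d + r ≤ m) {x : ZMod m} (hx : x ∈ S) : x + (d : ZMod m) ∉ S := by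
  intro hy
  obtain ⟨z, hz⟩ := hS _ hx _ hy
  rw [Finset.mem_inter, mem_Wd, mem_Wd] at hz
  obtain ⟨⟨i, hi, h⟩, ⟨j, hj, h'⟩⟩ := hz
  rw [← h', add_assoc] at h
  have h3 := add_left_cancel h
  rw [← Nat.cast_add] at h3
  have := cast_inj_small h3 (by omega) (by omega)
  omega

lemma kat_sub (hS : ∀ x ∈ S, ∀ y ∈ S, (Wd m r x ∩ Wd m r y).Nonempty) {k : ZMod m} (hk : k ∈ S) :
    S = (Finset.range r).biUnion
      (fun i => S.filter (fun x => x = k + (i : ZMod m) ∨ x + (r : ZMod m) = k + (i : ZMod m))) := by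
  ext x
  simp only [Finset.mem_biUnion, Finset.mem_range, Finset.mem_filter]
  constructor
  · intro hx
    obtain ⟨z, hz⟩ := hS _ hk _ hx
    rw [Finset.mem_inter, mem_Wd, mem_Wd] at hz
    obtain ⟨⟨i, hi, h⟩, ⟨j, hj, h'⟩⟩ := hz
    rcases le_or_gt j i with hij | hij
    · refine ⟨i - j, by omega, hx, Or.inl ?_⟩
      rw [Nat.cast_sub hij]; linear_combination h' - h
    · refine ⟨i + r - j, by omega, hx, Or.inr ?_⟩
      rw [Nat.cast_sub (by omega)]; push_cast; linear_combination h' - h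
  · rintro ⟨_, _, h, _⟩; exact h

lemma kat_le1 (hm : 2 * r ≤ m) (hS : ∀ x ∈ S, ∀ y ∈ S, (Wd m r x ∩ Wd m r y).Nonempty)
    (k : ZMod m) (i : ℕ) :
    (S.filter (fun x => x = k + (i : ZMod m) ∨ x + (r : ZMod m) = k + (i : ZMod m))).card ≤ 1 := by
  rw [Finset.card_le_one]
  intro a ha b hb
  rw [Finset.mem_filter] at ha hb
  obtain ⟨ha, ha'⟩ := ha
  obtain ⟨hb, hb'⟩ := hb
  rcases ha' with ha' | ha' <;> rcases hb' with hb' | hb'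
  · rw [ha', hb']
  · exfalso; rw [← hb'] at ha'
    exact kat_far hS le_rfl (by omega) hb (ha' ▸ ha)
  · exfalso; rw [← ha'] at hb'
    exact kat_far hS le_rfl (by omega) ha (hb' ▸ hb)
  · exact add_right_cancel (ha'.trans hb'.symm)

lemma kat_card (hm : 2 * r ≤ m) (hS : ∀ x ∈ S, ∀ y ∈ S, (Wd m r x ∩ Wd m r y).Nonempty) :
    S.card ≤ r := by
  rcases S.eq_empty_or_nonempty with rfl | ⟨k, hk⟩
  · simp
  rw [kat_sub hS hk]
  refine Finset.card_biUnion_le.trans ?_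
  refine (Finset.sum_le_sum (fun i _ => kat_le1 hm hS k i)).trans ?_
  simp

lemma kat_one (hm : 2 * r ≤ m) (hS : ∀ x ∈ S, ∀ y ∈ S, (Wd m r x ∩ Wd m r y).Nonempty)
    (hc : S.card = r) {k : ZMod m} (hk : k ∈ S) {i : ℕ} (hi : i < r) :
    k + (i : ZMod m) ∈ S ∨ k + (i : ZMod m) - (r : ZMod m) ∈ S := by
  by_contra hcon
  push Not at hcon
  have h0 : (S.filter (fun x => x = k + (i : ZMod m) ∨
      x + (r : ZMod m) = k + (i : ZMod m))).card < 1 := by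
    rw [Nat.lt_one_iff, Finset.card_eq_zero, Finset.filter_eq_empty_iff]
    rintro x hx (h | h)
    · exact hcon.1 (h ▸ hx)
    · apply hcon.2; rw [← h]; simpa using hx
  have : S.card < r := by
    rw [kat_sub hS hk]
    refine Finset.card_biUnion_le.trans_lt ?_
    refine (Finset.sum_lt_sum (fun i _ => kat_le1 hm hS k i)
      ⟨i, Finset.mem_range.2 hi, h0⟩).trans_le ?_
    simp
  omega

lemma kat_right (hm : 2 * r < m) (hS : ∀ x ∈ S, ∀ y ∈ S, (Wd m r x ∩ Wd m r y).Nonempty)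
    (hc : S.card = r) {k : ZMod m} (hk : k ∉ S) (hk1 : k + 1 ∈ S) :
    ∀ j < r, k + 1 + ((r - 1 - j : ℕ) : ZMod m) ∈ S := by
  intro j
  induction j with
  | zero =>
    intro hj
    rcases kat_one (by omega) hS hc hk1 (i := r - 1) (by omega) with h | h
    · simpa using h
    · exfalso; apply hk
      rw [Nat.cast_sub (by omega)] at h
      convert h using 1; push_cast; ring
  | succ j ih =>
    intro hj
    have h1 := ih (by omega)
    rcases kat_one (by omega) hS hc hk1 (i := r - 1 - (j + 1)) (by omega) with h | h
    · exact h
    · exfalso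
      refine kat_far hS (d := r + 1) (by omega) (by omega) h ?_
      convert h1 using 1
      have : r - 1 - j = (r - 1 - (j+1)) + 1 := by omega
      rw [this]; push_cast; ring

lemma kat_left (hm : 2 * r < m) (hS : ∀ x ∈ S, ∀ y ∈ S, (Wd m r x ∩ Wd m r y).Nonempty)
    (hc : S.card = r) {k : ZMod m} (hk : k ∈ S) (hk1 : k + 1 ∉ S) :
    ∀ j < r, k + ((j + 1 : ℕ) : ZMod m) - (r : ZMod m) ∈ S := by
  intro j
  induction j with
  | zero =>
    intro hj
    by_cases hr1 : r = 1
    · subst hr1; simpa using hk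
    rcases kat_one (by omega) hS hc hk (i := 1) (by omega) with h | h
    · exfalso; apply hk1; simpa using h
    · simpa using h
  | succ j ih =>
    intro hj
    have h1 := ih (by omega)
    by_cases hj2 : j + 2 = r
    · subst hj2
      convert hk using 1; push_cast; ring
    rcases kat_one (by omega) hS hc hk (i := j + 1 + 1) (by omega) with h | h
    · exfalso
      refine kat_far hS (d := r + 1) (by omega) (by omega) h1 ?_
      convert h using 1
      push_cast; ring
    · exact h

end kat

lemma prt_natCast {n t m : ℕ} (hm : m = n * t) (a : ℕ) : prt n (a : ZMod m) = a % n := by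
  rw [prt, ZMod.val_natCast, hm, Nat.mod_mul_right_mod]

/-- automorphisms -/
def GG (n m : ℕ) : Subgroup (Equiv.Perm (ZMod m)) where
  carrier := {g | ∀ x y, prt n (g x) = prt n (g y) ↔ prt n x = prt n y}
  mul_mem' := by
    intro a b ha hb x y
    simp only [Equiv.Perm.mul_apply]
    rw [ha, hb]
  one_mem' := by intro x y; simp
  inv_mem' := by
    intro a ha x y
    have := ha (a⁻¹ x) (a⁻¹ y)
    simpa using this.symm

lemma mem_GG {n m : ℕ} {g : Equiv.Perm (ZMod m)} :
    g ∈ GG n m ↔ ∀ x y, prt n (g x) = prt n (g y) ↔ prt n x = prt n y := Iff.rfl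

lemma trans_mem {n t m : ℕ} [NeZero m] (hm : m = n * t) (k : ZMod m) : Equiv.addRight k ∈ GG n m := by
  rw [mem_GG]
  intro x y
  have key : ∀ z : ZMod m, prt n (z + k) = (z.val + k.val) % n := by
    intro z
    rw [← prt_natCast hm]; simp
  simp only [Equiv.coe_addRight]
  rw [key, key]
  unfold prt
  exact ⟨fun h => Nat.ModEq.add_right_cancel' _ h, fun h => Nat.ModEq.add_right _ h⟩

lemma swap_mem {n m : ℕ} {a b : ZMod m} (h : prt n a = prt n b) : Equiv.swap a b ∈ GG n m := by
  rw [mem_GG]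
  have key : ∀ z : ZMod m, prt n (Equiv.swap a b z) = prt n z := by
    intro z
    rw [Equiv.swap_apply_def]
    split_ifs with h1 h2
    · rw [h1, h]
    · rw [h2, h]
    · rfl
  intro x y; rw [key, key]

/-- coordinates -/
def eqv {n t m : ℕ} [NeZero m] (hm : m = n * t) : ZMod m ≃ Fin n × Fin t where
  toFun x := (⟨x.val % n, Nat.mod_lt _ (by
      rcases Nat.eq_zero_or_pos n with h | h
      · exact absurd (by simp [hm, h]) (NeZero.ne m)
      · exact h)⟩, ⟨x.val / n, by
      apply Nat.div_lt_of_lt_mul; rw [← hm]; exact ZMod.val_lt x⟩)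
  invFun p := ((p.1.val + n * p.2.val : ℕ) : ZMod m)
  left_inv x := by
    simp only
    rw [Nat.mod_add_div, ZMod.natCast_zmod_val]
  right_inv p := by
    obtain ⟨⟨i, hi⟩, ⟨b, hb⟩⟩ := p
    have hlt : i + n * b < m := by
      rw [hm]; 
      calc i + n * b < n + n * b := by omega
        _ = n * (b + 1) := by ring
        _ ≤ n * t := Nat.mul_le_mul_left _ hb
    have hv : ((i + n * b : ℕ) : ZMod m).val = i + n * b := by
      rw [ZMod.val_natCast, Nat.mod_eq_of_lt hlt]
    simp only [hv, Prod.mk.injEq, Fin.mk.injEq]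
    constructor
    · rw [Nat.add_mul_mod_self_left, Nat.mod_eq_of_lt hi]
    · rw [Nat.add_mul_div_left _ _ (by omega), Nat.div_eq_of_lt hi, zero_add]

lemma eqv_prt {n t m : ℕ} [NeZero m] (hm : m = n * t) (x : ZMod m) :
    ((eqv hm x).1 : ℕ) = prt n x := rfl

lemma prt_iff {n t m : ℕ} [NeZero m] (hm : m = n * t) (x y : ZMod m) :
    prt n x = prt n y ↔ (eqv hm x).1 = (eqv hm y).1 := by
  rw [Fin.ext_iff]; rfl

lemma exists_val {n t m : ℕ} [NeZero m] (hm : m = n * t) (ht : 0 < t) (A : Finset (ZMod m))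
    (hA : Set.InjOn (prt n) (A : Set (ZMod m))) :
    ∃ s : Fin n → Fin t, ∀ x ∈ A, (eqv hm x).2 = s (eqv hm x).1 := by
  classical
  refine ⟨fun j => if h : ∃ x ∈ A, (eqv hm x).1 = j then (eqv hm h.choose).2 else ⟨0, ht⟩, ?_⟩
  intro x hx
  have h : ∃ y ∈ A, (eqv hm y).1 = (eqv hm x).1 := ⟨x, hx, rfl⟩
  simp only [dif_pos h]
  have h1 := h.choose_spec
  have : h.choose = x := hA h1.1 hx ((prt_iff hm _ _).2 h1.2)
  rw [this]

lemma transitive {n t m : ℕ} [NeZero m] (hm : m = n * t) (ht : 0 < t) (A B : Finset (ZMod m))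
    (hA : Set.InjOn (prt n) (A : Set (ZMod m))) (hB : Set.InjOn (prt n) (B : Set (ZMod m)))
    (hAB : A.card = B.card) : ∃ g ∈ GG n m, A.image g = B := by
  obtain ⟨w, hw⟩ := exists_val hm ht A hA
  obtain ⟨s, hs⟩ := exists_val hm ht B hB
  set PA := A.image (fun x => (eqv hm x).1) with hPA
  set PB := B.image (fun x => (eqv hm x).1) with hPB
  have cA : PA.card = A.card := Finset.card_image_of_injOn (fun x hx y hy h =>
    hA hx hy ((prt_iff hm _ _).2 h))
  have cB : PB.card = B.card := Finset.card_image_of_injOn (fun x hx y hy h =>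
    hB hx hy ((prt_iff hm _ _).2 h))
  have e0 : {x // x ∈ PA} ≃ {x // x ∈ PB} := Finset.equivOfCardEq (by rw [cA, cB, hAB])
  set π : Equiv.Perm (Fin n) := Equiv.extendSubtype e0 with hπ
  have hπm : ∀ i ∈ PA, π i ∈ PB := fun i hi => Equiv.extendSubtype_mem e0 i hi
  set Φ : Fin n × Fin t ≃ Fin n × Fin t :=
    Equiv.prodShear π (fun i => Equiv.swap (w i) (s (π i))) with hΦ
  have hΦ1 : ∀ p, (Φ p).1 = π p.1 := fun p => rfl
  have hΦ2 : ∀ p, (Φ p).2 = Equiv.swap (w p.1) (s (π p.1)) p.2 := fun p => rfl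
  refine ⟨((eqv hm).trans Φ).trans (eqv hm).symm, ?_, ?_⟩
  · rw [mem_GG]
    intro x y
    rw [prt_iff hm, prt_iff hm]
    simp [hΦ1]
  · apply Finset.eq_of_subset_of_card_le
    · intro z hz
      rw [Finset.mem_image] at hz
      obtain ⟨x, hx, rfl⟩ := hz
      have h1 := hπm _ (Finset.mem_image_of_mem (fun x => (eqv hm x).1) hx)
      rw [hPB, Finset.mem_image] at h1
      obtain ⟨y, hy, hyx⟩ := h1
      have : Φ (eqv hm x) = eqv hm y := by
        apply Prod.ext
        · rw [hΦ1, hyx]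
        · rw [hΦ2, hw x hx, Equiv.swap_apply_left, hs y hy, hyx]
      simp only [Equiv.trans_apply, this, Equiv.symm_apply_apply]
      exact hy
    · rw [Finset.card_image_of_injective _ (Equiv.injective _), hAB]

lemma Wd_inj {n t m r : ℕ} (hm : m = n * t) (hr : r ≤ n) :
    Set.InjOn (prt n) (Wd m r 0 : Set (ZMod m)) := by
  intro x hx y hy h
  rw [Finset.mem_coe, mem_Wd] at hx hy
  obtain ⟨i, hi, rfl⟩ := hx
  obtain ⟨j, hj, rfl⟩ := hy
  rw [zero_add, zero_add, prt_natCast hm, prt_natCast hm, Nat.mod_eq_of_lt (by omega),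
    Nat.mod_eq_of_lt (by omega)] at h
  rw [h]

/-- number of windows -/
noncomputable def cnt {m : ℕ} [NeZero m] (r : ℕ) (𝒜 : Finset (Finset (ZMod m)))
    (g : Equiv.Perm (ZMod m)) : Finset (ZMod m) :=
  Finset.univ.filter (fun k => (Wd m r k).image g ∈ 𝒜)

lemma Wd_trans {m r : ℕ} (k : ZMod m) : Wd m r k = (Wd m r 0).image (Equiv.addRight k) := by
  ext x
  simp only [mem_Wd, Finset.mem_image, Equiv.coe_addRight]
  constructor
  · rintro ⟨i, hi, rfl⟩; exact ⟨_, ⟨i, hi, rfl⟩, by ring⟩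
  · rintro ⟨_, ⟨i, hi, rfl⟩, rfl⟩; exact ⟨i, hi, by ring⟩

lemma count_all {n t m r : ℕ} [NeZero m] (hm : m = n * t) (ht : 0 < t) (hr : r ≤ n)
    (𝒜 : Finset (Finset (ZMod m)))
    (h𝒜 : ∀ A ∈ 𝒜, A.card = r ∧ Set.InjOn (prt n) (A : Set (ZMod m))) :
    ∑ g : GG n m, (cnt r 𝒜 g).card =
      m * (𝒜.card * (Finset.univ.filter
        (fun g : GG n m => (Wd m r 0).image g.1 = Wd m r 0)).card) := by
  have hrm : r ≤ m := by rw [hm]; exact hr.trans (Nat.le_mul_of_pos_right _ ht)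
  have h1 : ∀ k : ZMod m, (∑ g : GG n m, if (Wd m r k).image g.1 ∈ 𝒜 then 1 else 0) =
      (∑ g : GG n m, if (Wd m r 0).image g.1 ∈ 𝒜 then 1 else 0) := by
    intro k
    refine Fintype.sum_equiv (Equiv.mulRight (⟨_, trans_mem hm k⟩ : GG n m)) _ _ ?_
    intro g
    rw [Wd_trans k, Finset.image_image]
    rfl
  have h2 : (∑ g : GG n m, if (Wd m r 0).image g.1 ∈ 𝒜 then 1 else 0) =
      ∑ A ∈ 𝒜, (Finset.univ.filter (fun g : GG n m => (Wd m r 0).image g.1 = A)).card := by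
    rw [← Finset.card_filter]
    rw [Finset.card_eq_sum_card_fiberwise (f := fun g : GG n m => (Wd m r 0).image g.1) (t := 𝒜)]
    · refine Finset.sum_congr rfl fun A hA => ?_
      congr 1
      ext g
      simp only [Finset.mem_filter, Finset.mem_univ, true_and]
      constructor
      · exact fun h => h.2
      · intro h; exact ⟨h ▸ hA, h⟩
    · intro g hg
      simpa using hg
  have h3 : ∀ A ∈ 𝒜, (Finset.univ.filter (fun g : GG n m => (Wd m r 0).image g.1 = A)).card =
      (Finset.univ.filter (fun g : GG n m => (Wd m r 0).image g.1 = Wd m r 0)).card := by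
    intro A hA
    obtain ⟨h, hh, hhA⟩ := transitive hm ht (Wd m r 0) A (Wd_inj hm hr) (h𝒜 A hA).2
      (by rw [Wd_card hrm, (h𝒜 A hA).1])
    symm
    refine Finset.card_equiv (Equiv.mulLeft (⟨h, hh⟩ : GG n m)) ?_
    intro g
    simp only [Finset.mem_filter, Finset.mem_univ, true_and]
    have : (Wd m r 0).image ((Equiv.mulLeft (⟨h, hh⟩ : GG n m)) g).1
        = ((Wd m r 0).image g.1).image h := by
      rw [Finset.image_image]; rfl
    rw [this, ← hhA]
    exact (Finset.image_injective h.injective).eq_iff.symm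
  calc ∑ g : GG n m, (cnt r 𝒜 g).card
      = ∑ g : GG n m, ∑ k : ZMod m, (if (Wd m r k).image g.1 ∈ 𝒜 then 1 else 0) := by
        refine Finset.sum_congr rfl fun g _ => ?_
        rw [cnt, Finset.card_filter]
    _ = ∑ k : ZMod m, ∑ g : GG n m, (if (Wd m r k).image g.1 ∈ 𝒜 then 1 else 0) :=
        Finset.sum_comm
    _ = ∑ k : ZMod m, ∑ g : GG n m, (if (Wd m r 0).image g.1 ∈ 𝒜 then 1 else 0) :=
        Finset.sum_congr rfl fun k _ => h1 k
    _ = _ := by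
        rw [h2, Finset.sum_congr rfl h3]
        simp [ZMod.card]

lemma cnt_inter {m r : ℕ} [NeZero m] {𝒜 : Finset (Finset (ZMod m))}
    (hI : ∀ A ∈ 𝒜, ∀ B ∈ 𝒜, (A ∩ B).Nonempty) (g : Equiv.Perm (ZMod m)) :
    ∀ x ∈ cnt r 𝒜 g, ∀ y ∈ cnt r 𝒜 g, (Wd m r x ∩ Wd m r y).Nonempty := by
  intro x hx y hy
  simp only [cnt, Finset.mem_filter, Finset.mem_univ, true_and] at hx hy
  have := hI _ hx _ hy
  rw [← Finset.image_inter _ _ g.injective] at this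
  exact Finset.image_nonempty.1 this

lemma cnt_star {m r : ℕ} [NeZero m] (hrm : r ≤ m) {𝒜 : Finset (Finset (ZMod m))} (v : ZMod m)
    (g : Equiv.Perm (ZMod m))
    (hv : ∀ k, (Wd m r k).image g ∈ 𝒜 ↔ v ∈ (Wd m r k).image g) : (cnt r 𝒜 g).card = r := by
  have : cnt r 𝒜 g = (Finset.range r).image (fun i : ℕ => g.symm v - (i : ZMod m)) := by
    ext k
    simp only [cnt, Finset.mem_filter, Finset.mem_univ, true_and, hv, Finset.mem_image, mem_Wd,
      Finset.mem_range]
    constructor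
    · rintro ⟨a, ⟨i, hi, rfl⟩, rfl⟩
      exact ⟨i, hi, by simp⟩
    · rintro ⟨i, hi, rfl⟩
      exact ⟨_, ⟨i, hi, rfl⟩, by simp⟩
  rw [this, Finset.card_image_of_injOn, Finset.card_range]
  intro a ha b hb h
  simp only [Finset.coe_range, Set.mem_Iio] at ha hb
  have h' : (a : ZMod m) = b := sub_right_injective h
  rcases le_total a b with hab | hab
  · exact cast_inj_small h' hab (by omega)
  · exact (cast_inj_small h'.symm hab (by omega)).symm

lemma image_inj {n m : ℕ} (g : Equiv.Perm (ZMod m)) (hg : g ∈ GG n m) (A : Finset (ZMod m))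
    (hA : Set.InjOn (prt n) (A : Set (ZMod m))) :
    Set.InjOn (prt n) ((A.image g : Finset (ZMod m)) : Set (ZMod m)) := by
  intro x hx y hy h
  simp only [Finset.coe_image, Set.mem_image, Finset.mem_coe] at hx hy
  obtain ⟨a, ha, rfl⟩ := hx
  obtain ⟨b, hb, rfl⟩ := hy
  rw [hA ha hb ((hg a b).1 h)]

theorem core_bound {n t m r : ℕ} [NeZero m] (hm : m = n * t) (ht : 2 ≤ t) (hr : r ≤ n)
    (𝒜 𝒮 : Finset (Finset (ZMod m))) (v : ZMod m)
    (h𝒜 : ∀ A ∈ 𝒜, A.card = r ∧ Set.InjOn (prt n) (A : Set (ZMod m)))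
    (hI : ∀ A ∈ 𝒜, ∀ B ∈ 𝒜, (A ∩ B).Nonempty)
    (h𝒮 : ∀ A, A ∈ 𝒮 ↔ (A.card = r ∧ Set.InjOn (prt n) (A : Set (ZMod m))) ∧ v ∈ A) :
    𝒜.card ≤ 𝒮.card ∧ (𝒜.card = 𝒮.card → ∀ g ∈ GG n m, (cnt r 𝒜 g).card = r) := by
  have hm2 : 2 * r ≤ m := by rw [hm, mul_comm]; exact Nat.mul_le_mul hr ht
  have c1 := count_all hm (by omega) hr 𝒜 h𝒜
  have c2 := count_all hm (by omega) hr 𝒮 (fun A hA => ((h𝒮 A).1 hA).1)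
  have s2 : ∑ g : GG n m, (cnt r 𝒮 g.1).card = ∑ g : GG n m, r := by
    refine Finset.sum_congr rfl fun g _ => ?_
    refine cnt_star (by omega) v g.1 fun k => ?_
    rw [h𝒮, and_iff_right]
    have hk : (Wd m r k).image g.1 = (Wd m r 0).image (g * ⟨_, trans_mem hm k⟩ : GG n m).1 := by
      rw [Wd_trans k, Finset.image_image]; rfl
    refine ⟨?_, ?_⟩
    · rw [Finset.card_image_of_injective _ g.1.injective, Wd_card (by omega)]
    · rw [hk]; exact image_inj _ (Subtype.property _) _ (Wd_inj hm hr)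
  have hle : ∀ g ∈ (Finset.univ : Finset (GG n m)), (cnt r 𝒜 g.1).card ≤ r := fun g _ =>
    kat_card hm2 (cnt_inter hI g.1)
  have s1 := Finset.sum_le_sum hle
  set c := (Finset.univ.filter (fun g : GG n m => (Wd m r 0).image g.1 = Wd m r 0)).card with hc
  have hcpos : 0 < c := by
    rw [hc, Finset.card_pos]
    exact ⟨1, by simp⟩
  have hmpos : 0 < m := NeZero.pos m
  constructor
  · rw [← s2, c1, c2] at s1
    have := Nat.le_of_mul_le_mul_left s1 hmpos
    exact Nat.le_of_mul_le_mul_right this hcpos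
  · intro heq g hg
    have : ∑ g : GG n m, (cnt r 𝒜 g.1).card = ∑ g : GG n m, r := by
      rw [← s2, c1, c2, heq]
    exact (Finset.sum_eq_sum_iff_of_le hle).1 this ⟨g, hg⟩ (Finset.mem_univ _)

/-- `g` has its centre at position `r`. -/
def PP {m : ℕ} (r : ℕ) (𝒜 : Finset (Finset (ZMod m))) (g : Equiv.Perm (ZMod m)) : Prop :=
  (Wd m r ((0 : ℕ) : ZMod m)).image g ∉ 𝒜 ∧ (Wd m r ((1 : ℕ) : ZMod m)).image g ∈ 𝒜

section strict
variable {n t m r : ℕ} [NeZero m] {𝒜 : Finset (Finset (ZMod m))}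

lemma mem_cnt {g : Equiv.Perm (ZMod m)} {k : ZMod m} :
    k ∈ cnt r 𝒜 g ↔ (Wd m r k).image g ∈ 𝒜 := by simp [cnt]

lemma PP_all (hlt : 2 * r < m) (hI : ∀ A ∈ 𝒜, ∀ B ∈ 𝒜, (A ∩ B).Nonempty)
    {g : Equiv.Perm (ZMod m)} (hc : (cnt r 𝒜 g).card = r) (hg : PP r 𝒜 g) (k : ℕ) (h1 : 1 ≤ k)
    (h2 : k ≤ r) : (Wd m r (k : ZMod m)).image g ∈ 𝒜 := by
  have := kat_right (k := ((0 : ℕ) : ZMod m)) hlt (cnt_inter hI g) hc (by rw [mem_cnt]; exact hg.1)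
    (by rw [mem_cnt]; simpa using hg.2) (r - k) (by omega)
  rw [mem_cnt] at this
  convert this using 3
  have h : k = 1 + (r - 1 - (r - k)) := by omega
  conv_lhs => rw [h]
  push_cast; ring

lemma PP_end (hlt : 2 * r < m) (hI : ∀ A ∈ 𝒜, ∀ B ∈ 𝒜, (A ∩ B).Nonempty)
    {g : Equiv.Perm (ZMod m)} (hg : PP r 𝒜 g) :
    (Wd m r ((r + 1 : ℕ) : ZMod m)).image g ∉ 𝒜 := by
  have := kat_far (cnt_inter (r := r) hI g) (d := r) le_rfl (by omega) (mem_cnt.2 hg.2)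
  rw [mem_cnt] at this
  convert this using 4
  push_cast; ring

lemma PP_of_right (hr : 0 < r) (hlt : 2 * r < m) (hI : ∀ A ∈ 𝒜, ∀ B ∈ 𝒜, (A ∩ B).Nonempty)
    {g : Equiv.Perm (ZMod m)} (hc : (cnt r 𝒜 g).card = r)
    (h1 : (Wd m r (r : ZMod m)).image g ∈ 𝒜)
    (h2 : (Wd m r ((r + 1 : ℕ) : ZMod m)).image g ∉ 𝒜) : PP r 𝒜 g := by
  constructor
  · intro h
    have := kat_far (cnt_inter (r := r) hI g) (d := r) le_rfl (by omega) (mem_cnt.2 h)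
    rw [mem_cnt] at this
    apply this; simpa using h1
  · have := kat_left (k := (r : ZMod m)) hlt (cnt_inter hI g) hc (mem_cnt.2 h1)
      (by rw [mem_cnt]; simpa using h2) 0 hr
    rw [mem_cnt] at this
    simpa using this

lemma PP_exists (hm : m = n * t) (hr : 0 < r) (hlt : 2 * r < m)
    (hC : ∀ g ∈ GG n m, (cnt r 𝒜 g).card = r) : ∃ g ∈ GG n m, PP r 𝒜 g := by
  have hc := hC 1 (one_mem _)
  set S := cnt r 𝒜 1 with hS
  have hex : ∃ k, k ∉ S ∧ k + 1 ∈ S := by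
    by_contra hcon
    push Not at hcon
    have hne : S.Nonempty := by rw [← Finset.card_pos]; omega
    obtain ⟨a, ha⟩ := hne
    have hall : ∀ j : ℕ, a - (j : ZMod m) ∈ S := by
      intro j
      induction j with
      | zero => simpa using ha
      | succ j ih =>
        by_contra hno
        apply hcon _ hno
        convert ih using 1; push_cast; ring
    have : S = Finset.univ := by
      ext x
      simp only [Finset.mem_univ, iff_true]
      have := hall (a - x).val
      simpa using this
    rw [this, Finset.card_univ, ZMod.card] at hc
    omega
  obtain ⟨k, hk, hk1⟩ := hex
  refine ⟨Equiv.addRight k, trans_mem hm k, ?_, ?_⟩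
  · rw [hS, mem_cnt, Wd_trans] at hk
    simpa using hk
  · rw [hS, mem_cnt, Wd_trans] at hk1
    rw [Wd_trans, Finset.image_image]
    convert hk1 using 1
    simp only [Finset.image_image]
    congr 1
    funext x
    simp; ring

lemma image_swap_eq {α : Type*} [DecidableEq α] {W : Finset α} {a b : α} (h : a ∈ W ↔ b ∈ W) :
    W.image (Equiv.swap a b) = W := by
  apply Finset.eq_of_subset_of_card_le
  · intro z hz
    rw [Finset.mem_image] at hz
    obtain ⟨x, hx, rfl⟩ := hz
    rw [Equiv.swap_apply_def]
    split_ifs with h1 h2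
    · subst h1; exact h.1 hx
    · subst h2; exact h.2 hx
    · exact hx
  · rw [Finset.card_image_of_injective _ (Equiv.injective _)]

lemma img_mul (W : Finset (ZMod m)) (g h : Equiv.Perm (ZMod m)) :
    W.image (g * h : Equiv.Perm (ZMod m)) = (W.image h).image g := by
  rw [Finset.image_image]; rfl

lemma PP_congr_left {g h : Equiv.Perm (ZMod m)} (hg : PP r 𝒜 g)
    (h0 : (Wd m r ((0 : ℕ) : ZMod m)).image h = Wd m r ((0 : ℕ) : ZMod m))
    (h1 : (Wd m r ((1 : ℕ) : ZMod m)).image h = Wd m r ((1 : ℕ) : ZMod m)) :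
    PP r 𝒜 (g * h) := by
  unfold PP
  rw [img_mul, img_mul, h0, h1]; exact hg

/-- value swap of position `x` with `x+n`, both past the centre. -/
lemma val_move (hm : m = n * t) {g : Equiv.Perm (ZMod m)} (hg : g ∈ GG n m) (hP : PP r 𝒜 g)
    {x : ℕ} (h1 : r < x) (h2 : x + n < m) :
    g * Equiv.swap (x : ZMod m) ((x + n : ℕ) : ZMod m) ∈ GG n m ∧
    PP r 𝒜 (g * Equiv.swap (x : ZMod m) ((x + n : ℕ) : ZMod m)) := by
  refine ⟨mul_mem hg (swap_mem ?_), PP_congr_left hP ?_ ?_⟩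
  · rw [prt_natCast hm, prt_natCast hm, Nat.add_mod_right]
  · exact image_swap_eq (iff_of_false (Wd_out (by omega) (by omega)) (Wd_out (by omega) (by omega)))
  · exact image_swap_eq (iff_of_false (Wd_out (by omega) (by omega)) (Wd_out (by omega) (by omega)))

lemma cast_ne {a b : ℕ} (h : a < b) (h2 : b < a + m) : (a : ZMod m) ≠ (b : ZMod m) := by
  intro hh
  have := cast_inj_small hh (by omega) h2
  omega

/-- Clearing `D` from the first `s` positions after the centre. -/
lemma clear (hm : m = n * t) (hr : 0 < r) (hrn : r ≤ n) {D : Finset (ZMod m)}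
    (hD : Set.InjOn (prt n) (D : Set (ZMod m))) {g : Equiv.Perm (ZMod m)} (hg : g ∈ GG n m)
    (hP : PP r 𝒜 g) (s : ℕ) (hs : s < n) (hsm : r + s + n < m) :
    ∃ g' ∈ GG n m, PP r 𝒜 g' ∧ g' (r : ZMod m) = g (r : ZMod m) ∧
      ∀ i, 1 ≤ i → i ≤ s → g' ((r + i : ℕ) : ZMod m) ∉ D := by
  induction s with
  | zero => exact ⟨g, hg, hP, rfl, fun i _ _ => by omega⟩
  | succ s ih =>
    obtain ⟨g', hg', hP', hc, hi⟩ := ih (by omega) (by omega)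
    by_cases hb : g' ((r + (s + 1) : ℕ) : ZMod m) ∈ D
    · obtain ⟨hn1, hn2⟩ := val_move hm hg' hP' (x := r + (s + 1)) (by omega) (by omega)
      refine ⟨_, hn1, hn2, ?_, ?_⟩
      · rw [Equiv.Perm.mul_apply, Equiv.swap_apply_of_ne_of_ne, hc]
        · exact cast_ne (by omega) (by omega)
        · exact cast_ne (by omega) (by omega)
      · intro i h1 h2
        rw [Equiv.Perm.mul_apply]
        rcases Nat.lt_or_ge i (s + 1) with h3 | h3
        · rw [Equiv.swap_apply_of_ne_of_ne]
          · exact hi i h1 (by omega)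
          · exact cast_ne (by omega) (by omega)
          · exact cast_ne (by omega) (by omega)
        · have : i = s + 1 := by omega
          subst this
          rw [Equiv.swap_apply_left]
          intro hb2
          have := hD hb hb2 ((hg' _ _).2 (by
            rw [prt_natCast hm, prt_natCast hm, Nat.add_mod_right]))
          exact cast_ne (by omega) (by omega) (g'.injective this)
    · refine ⟨g', hg', hP', hc, fun i h1 h2 => ?_⟩
      rcases Nat.lt_or_ge i (s + 1) with h3 | h3
      · exact hi i h1 (by omega)
      · have : i = s + 1 := by omega
        subst this; exact hb

/-- If the window just from the centre avoids `D`, contradiction. -/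
lemma finish_k (hlt : 2 * r < m) (hI : ∀ A ∈ 𝒜, ∀ B ∈ 𝒜, (A ∩ B).Nonempty)
    {D : Finset (ZMod m)} (hDA : D ∈ 𝒜)
    {g : Equiv.Perm (ZMod m)} (hc : (cnt r 𝒜 g).card = r) (hg : PP r 𝒜 g) (k : ℕ) (h1 : 1 ≤ k)
    (h2 : k ≤ r) (h : ∀ x : ℕ, k ≤ x → x < k + r → g (x : ZMod m) ∉ D) : False := by
  obtain ⟨z, hz⟩ := hI _ (PP_all hlt hI hc hg k h1 h2) _ hDA
  rw [Finset.mem_inter, Finset.mem_image] at hz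
  obtain ⟨⟨y, hy, rfl⟩, hzD⟩ := hz
  rw [mem_Wd] at hy
  obtain ⟨i, hi, rfl⟩ := hy
  rw [← Nat.cast_add] at hzD
  exact h _ (by omega) (by omega) hzD

lemma finish_r (hr : 0 < r) (hlt : 2 * r < m) (hI : ∀ A ∈ 𝒜, ∀ B ∈ 𝒜, (A ∩ B).Nonempty)
    {D : Finset (ZMod m)} (hDA : D ∈ 𝒜)
    {g : Equiv.Perm (ZMod m)} (hc : (cnt r 𝒜 g).card = r) (hg : PP r 𝒜 g)
    (h0 : g (r : ZMod m) ∉ D)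
    (h : ∀ i, 1 ≤ i → i ≤ r - 1 → g ((r + i : ℕ) : ZMod m) ∉ D) : False := by
  refine finish_k hlt hI hDA hc hg r hr le_rfl fun x hx1 hx2 => ?_
  rcases Nat.eq_or_lt_of_le hx1 with rfl | hx
  · exact h0
  · obtain ⟨i, rfl⟩ := Nat.exists_eq_add_of_le hx1
    exact h i (by omega) (by omega)

lemma caseA (hm : m = n * t) (hr : 0 < r) (hrn : r ≤ n) (hlt : 2 * r < m) (hbig : n + 2 * r ≤ m)
    (hI : ∀ A ∈ 𝒜, ∀ B ∈ 𝒜, (A ∩ B).Nonempty)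
    (hC : ∀ g ∈ GG n m, (cnt r 𝒜 g).card = r) {D : Finset (ZMod m)} (hDA : D ∈ 𝒜)
    (hD : Set.InjOn (prt n) (D : Set (ZMod m))) {g : Equiv.Perm (ZMod m)} (hg : g ∈ GG n m)
    (hP : PP r 𝒜 g) : g (r : ZMod m) ∈ D := by
  by_contra h0
  obtain ⟨g', hg', hP', hc, hi⟩ := clear hm hr hrn hD hg hP (r - 1) (by omega) (by omega)
  exact finish_r hr hlt hI hDA (hC _ hg') hP' (hc ▸ h0) hi

/-- residue swap when `t = 2`. -/
def rsw (m n : ℕ) (a b : ℕ) : Equiv.Perm (ZMod m) :=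
  Equiv.swap (a : ZMod m) (b : ZMod m) *
    Equiv.swap ((a + n : ℕ) : ZMod m) ((b + n : ℕ) : ZMod m)

lemma two_lifts (hm : m = n * 2) (x : ZMod m) (a : ℕ) (h : prt n x = a % n) :
    x = (a : ZMod m) ∨ x = ((a + n : ℕ) : ZMod m) := by
  have hx : x = ((x.val : ℕ) : ZMod m) := by simp
  have h1 : a ≡ x.val [MOD n] := h.symm
  obtain ⟨c, hc⟩ := (Nat.modEq_iff_dvd.1 h1)
  rw [hx, ZMod.natCast_eq_natCast_iff, ZMod.natCast_eq_natCast_iff]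
  rcases Int.even_or_odd' c with ⟨d, hd | hd⟩
  · left
    refine (Nat.modEq_iff_dvd.2 ⟨d, ?_⟩).symm
    rw [hc, hd, hm]; push_cast; ring
  · right
    refine (Nat.modEq_iff_dvd.2 ⟨d, ?_⟩).symm
    have : (x.val : ℤ) = a + n * c := by linarith
    rw [Nat.cast_add, this, hd, hm]; push_cast; ring

lemma rsw_left (hm : m = n * 2) {a b : ℕ} (h1 : a < b) (h2 : b < a + n) :
    rsw m n a b (a : ZMod m) = (b : ZMod m) := by
  rw [rsw, Equiv.Perm.mul_apply, Equiv.swap_apply_of_ne_of_ne (x := (a : ZMod m)),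
    Equiv.swap_apply_left]
  · exact cast_ne (by omega) (by omega)
  · exact cast_ne (by omega) (by omega)

lemma rsw_right (hm : m = n * 2) {a b : ℕ} (h1 : a < b) (h2 : b < a + n) :
    rsw m n a b (b : ZMod m) = (a : ZMod m) := by
  rw [rsw, Equiv.Perm.mul_apply, Equiv.swap_apply_of_ne_of_ne (x := (b : ZMod m)),
    Equiv.swap_apply_right]
  · exact cast_ne (by omega) (by omega)
  · exact cast_ne (by omega) (by omega)

lemma rsw_left' (hm : m = n * 2) {a b : ℕ} (h1 : a < b) (h2 : b < a + n) :
    rsw m n a b ((a + n : ℕ) : ZMod m) = ((b + n : ℕ) : ZMod m) := by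
  rw [rsw, Equiv.Perm.mul_apply, Equiv.swap_apply_left, Equiv.swap_apply_of_ne_of_ne]
  · exact (cast_ne (by omega) (by omega)).symm
  · exact (cast_ne (by omega) (by omega)).symm

lemma rsw_right' (hm : m = n * 2) {a b : ℕ} (h1 : a < b) (h2 : b < a + n) :
    rsw m n a b ((b + n : ℕ) : ZMod m) = ((a + n : ℕ) : ZMod m) := by
  rw [rsw, Equiv.Perm.mul_apply, Equiv.swap_apply_right, Equiv.swap_apply_of_ne_of_ne]
  · exact (cast_ne (by omega) (by omega)).symm
  · exact (cast_ne (by omega) (by omega)).symm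

lemma rsw_other (hm : m = n * 2) {a b : ℕ} {x : ZMod m}
    (ha : prt n x ≠ a % n) (hb : prt n x ≠ b % n) : rsw m n a b x = x := by
  have key : ∀ y : ℕ, prt n x ≠ y % n → x ≠ (y : ZMod m) := by
    intro y hy h
    apply hy; rw [h, prt_natCast hm]
  rw [rsw, Equiv.Perm.mul_apply, Equiv.swap_apply_of_ne_of_ne (x := x),
    Equiv.swap_apply_of_ne_of_ne]
  · exact key _ ha
  · exact key _ hb
  · exact key _ (by rwa [Nat.add_mod_right])
  · exact key _ (by rwa [Nat.add_mod_right])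

lemma image_rsw {W : Finset (ZMod m)} {a b : ℕ} (h1 : (a : ZMod m) ∈ W ↔ (b : ZMod m) ∈ W)
    (h2 : ((a + n : ℕ) : ZMod m) ∈ W ↔ ((b + n : ℕ) : ZMod m) ∈ W) :
    W.image (rsw m n a b) = W := by
  rw [rsw, img_mul, image_swap_eq h2, image_swap_eq h1]

lemma rsw_mem (hm : m = n * 2) {a b : ℕ} (h1 : a < b) (h2 : b < a + n) :
    rsw m n a b ∈ GG n m := by
  have key : ∀ x, prt n (rsw m n a b x) = Equiv.swap (a % n) (b % n) (prt n x) := by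
    intro x
    by_cases ha : prt n x = a % n
    · rw [ha, Equiv.swap_apply_left]
      rcases two_lifts hm x a ha with h | h
      · rw [h, rsw_left hm h1 h2, prt_natCast hm]
      · rw [h, rsw_left' hm h1 h2, prt_natCast hm, Nat.add_mod_right]
    by_cases hb : prt n x = b % n
    · rw [hb, Equiv.swap_apply_right]
      rcases two_lifts hm x b hb with h | h
      · rw [h, rsw_right hm h1 h2, prt_natCast hm]
      · rw [h, rsw_right' hm h1 h2, prt_natCast hm, Nat.add_mod_right]
    rw [rsw_other hm ha hb, Equiv.swap_apply_of_ne_of_ne ha hb]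
  rw [mem_GG]
  intro x y
  rw [key, key]
  exact (Equiv.injective _).eq_iff

/-- `g'` is `g` with positions `a`, `b` exchanged (as far as `[r, r+n)` is concerned). -/
def Swp (n r : ℕ) {m : ℕ} (g g' : Equiv.Perm (ZMod m)) (a b : ℕ) : Prop :=
  g' (a : ZMod m) = g (b : ZMod m) ∧ g' (b : ZMod m) = g (a : ZMod m) ∧
    ∀ d : ℕ, r ≤ d → d < r + n → d ≠ a → d ≠ b → g' (d : ZMod m) = g (d : ZMod m)

lemma mod_ne {a d s : ℕ} (h1 : s ≤ a) (h2 : a < s + n) (h3 : s ≤ d) (h4 : d < s + n)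
    (hne : d ≠ a) : d % n ≠ a % n := by
  intro h
  rcases le_total d a with h5 | h5
  · have := Nat.eq_zero_of_dvd_of_lt ((Nat.modEq_iff_dvd' h5).1 h) (by omega)
    omega
  · have := Nat.eq_zero_of_dvd_of_lt ((Nat.modEq_iff_dvd' h5).1 (Eq.symm h)) (by omega)
    omega

lemma rsw_Swp (hm : m = n * 2) (g : Equiv.Perm (ZMod m)) {a b : ℕ} (h1 : r ≤ a) (h2 : a < b)
    (h3 : b < r + n) : Swp n r g (g * rsw m n a b) a b := by
  refine ⟨?_, ?_, ?_⟩
  · rw [Equiv.Perm.mul_apply, rsw_left hm h2 (by omega)]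
  · rw [Equiv.Perm.mul_apply, rsw_right hm h2 (by omega)]
  · intro d hd1 hd2 hd3 hd4
    rw [Equiv.Perm.mul_apply, rsw_other hm]
    · rw [prt_natCast hm]; exact mod_ne h1 (by omega) hd1 hd2 hd3
    · rw [prt_natCast hm]; exact mod_ne (by omega) h3 hd1 hd2 hd4

lemma move_right (hm : m = n * 2) (hr : 0 < r) (hrn : r < n)
    (hI : ∀ A ∈ 𝒜, ∀ B ∈ 𝒜, (A ∩ B).Nonempty)
    (hC : ∀ g ∈ GG n m, (cnt r 𝒜 g).card = r) {g : Equiv.Perm (ZMod m)} (hg : g ∈ GG n m)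
    (hP : PP r 𝒜 g) {a b : ℕ} (h1 : r < a) (h2 : a < b) (h3 : b < 2 * r) :
    g * rsw m n a b ∈ GG n m ∧ PP r 𝒜 (g * rsw m n a b) := by
  have hG : g * rsw m n a b ∈ GG n m := mul_mem hg (rsw_mem hm h2 (by omega))
  refine ⟨hG, PP_of_right hr (by omega) hI (hC _ hG) ?_ ?_⟩
  · rw [img_mul, image_rsw]
    · exact PP_all (by omega) hI (hC _ hg) hP r (by omega) le_rfl
    · exact iff_of_true (Wd_in (by omega) (by omega)) (Wd_in (by omega) (by omega))
    · exact iff_of_false (Wd_out (by omega) (by omega)) (Wd_out (by omega) (by omega))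
  · rw [img_mul, image_rsw]
    · exact PP_end (by omega) hI hP
    · exact iff_of_true (Wd_in (by omega) (by omega)) (Wd_in (by omega) (by omega))
    · exact iff_of_false (Wd_out (by omega) (by omega)) (Wd_out (by omega) (by omega))

lemma cast_wrap (hm : m = n * 2) {a : ℕ} (h : n ≤ a) :
    ((a + n : ℕ) : ZMod m) = ((a - n : ℕ) : ZMod m) := by
  have : a + n = (a - n) + m := by omega
  rw [this]; simp

lemma move_left (hm : m = n * 2) (hrn : r < n) {g : Equiv.Perm (ZMod m)} (hg : g ∈ GG n m)
    (hP : PP r 𝒜 g) {a b : ℕ} (h1 : n < a) (h2 : a < b) (h3 : b < n + r) :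
    g * rsw m n a b ∈ GG n m ∧ PP r 𝒜 (g * rsw m n a b) := by
  refine ⟨mul_mem hg (rsw_mem hm h2 (by omega)), PP_congr_left hP ?_ ?_⟩
  · apply image_rsw
    · exact iff_of_false (Wd_out (by omega) (by omega)) (Wd_out (by omega) (by omega))
    · rw [cast_wrap hm (by omega), cast_wrap hm (by omega)]
      exact iff_of_true (Wd_in (by omega) (by omega)) (Wd_in (by omega) (by omega))
  · apply image_rsw
    · exact iff_of_false (Wd_out (by omega) (by omega)) (Wd_out (by omega) (by omega))
    · rw [cast_wrap hm (by omega), cast_wrap hm (by omega)]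
      exact iff_of_true (Wd_in (by omega) (by omega)) (Wd_in (by omega) (by omega))

lemma move_any (hm : m = n * 2) (hr : 0 < r) (hrn : r < n) (h2r : n + 2 ≤ 2 * r)
    (hI : ∀ A ∈ 𝒜, ∀ B ∈ 𝒜, (A ∩ B).Nonempty)
    (hC : ∀ g ∈ GG n m, (cnt r 𝒜 g).card = r) {g : Equiv.Perm (ZMod m)} (hg : g ∈ GG n m)
    (hP : PP r 𝒜 g) {a b : ℕ} (h1 : r < a) (h2 : a < b) (h3 : b < r + n) :
    ∃ g' ∈ GG n m, PP r 𝒜 g' ∧ Swp n r g g' a b := by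
  by_cases hb : b < 2 * r
  · obtain ⟨hG, hP'⟩ := move_right hm hr hrn hI hC hg hP h1 h2 hb
    exact ⟨_, hG, hP', rsw_Swp hm g (by omega) h2 h3⟩
  by_cases ha : n < a
  · obtain ⟨hG, hP'⟩ := move_left hm hrn hg hP ha h2 (by omega)
    exact ⟨_, hG, hP', rsw_Swp hm g (by omega) h2 h3⟩
  obtain ⟨o, ho⟩ : ∃ o, o = 2 * r - 1 := ⟨_, rfl⟩
  have s1 := rsw_Swp (r := r) hm g (a := a) (b := o) (by omega) (by omega) (by omega)
  obtain ⟨hG1, hP1⟩ := move_right hm hr hrn hI hC hg hP (a := a) (b := o) h1 (by omega) (by omega)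
  generalize g * rsw m n a o = g1 at *
  have s2 := rsw_Swp (r := r) hm g1 (a := o) (b := b) (by omega) (by omega) (by omega)
  obtain ⟨hG2, hP2⟩ := move_left hm hrn hG1 hP1 (a := o) (b := b) (by omega) (by omega) (by omega)
  generalize g1 * rsw m n o b = g2 at *
  have s3 := rsw_Swp (r := r) hm g2 (a := a) (b := o) (by omega) (by omega) (by omega)
  obtain ⟨hG3, hP3⟩ := move_right hm hr hrn hI hC hG2 hP2 (a := a) (b := o) h1 (by omega) (by omega)
  generalize g2 * rsw m n a o = g3 at *
  refine ⟨g3, hG3, hP3, ?_, ?_, ?_⟩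
  · rw [s3.1, s2.1, s1.2.2 b (by omega) (by omega) (by omega) (by omega)]
  · rw [s3.2.2 b (by omega) (by omega) (by omega) (by omega), s2.2.1, s1.2.1]
  · intro d hd1 hd2 hd3 hd4
    by_cases hdo : d = o
    · subst hdo
      rw [s3.2.1, s2.2.2 a (by omega) (by omega) (by omega) (by omega), s1.1]
    · rw [s3.2.2 d hd1 hd2 hd3 hdo, s2.2.2 d hd1 hd2 hdo hd4, s1.2.2 d hd1 hd2 hd3 hdo]

lemma sorted (hm : m = n * 2) (hr : 0 < r) (hrn : r < n) (h2r : n + 2 ≤ 2 * r)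
    (hI : ∀ A ∈ 𝒜, ∀ B ∈ 𝒜, (A ∩ B).Nonempty)
    (hC : ∀ g ∈ GG n m, (cnt r 𝒜 g).card = r) {g : Equiv.Perm (ZMod m)} (hg : g ∈ GG n m)
    (hP : PP r 𝒜 g) (D : Finset (ZMod m)) (s : ℕ) (hs : s < n) :
    ∃ g' ∈ GG n m, PP r 𝒜 g' ∧ g' (r : ZMod m) = g (r : ZMod m) ∧ ∃ q ≤ s,
      (∀ d, r < d → d ≤ r + q → g' (d : ZMod m) ∉ D) ∧
      (∀ d, r + q < d → d ≤ r + s → g' (d : ZMod m) ∈ D) := by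
  induction s with
  | zero => exact ⟨g, hg, hP, rfl, 0, le_rfl, fun d _ _ => by omega, fun d _ _ => by omega⟩
  | succ s ih =>
    obtain ⟨g', hg', hP', hc, q, hq, hgood, hbad⟩ := ih (by omega)
    by_cases hb : g' ((r + (s + 1) : ℕ) : ZMod m) ∈ D
    · refine ⟨g', hg', hP', hc, q, by omega, hgood, fun d hd1 hd2 => ?_⟩
      rcases Nat.lt_or_ge d (r + (s + 1)) with h | h
      · exact hbad d hd1 (by omega)
      · obtain rfl : d = r + (s + 1) := by omega
        exact hb
    · rcases Nat.eq_or_lt_of_le hq with hqs | hqs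
      · refine ⟨g', hg', hP', hc, q + 1, by omega, fun d hd1 hd2 => ?_, fun d _ _ => by omega⟩
        rcases Nat.lt_or_ge d (r + (s + 1)) with h | h
        · exact hgood d hd1 (by omega)
        · obtain rfl : d = r + (s + 1) := by omega
          exact hb
      · obtain ⟨g2, hG2, hP2, s1, s2, s3⟩ := move_any hm hr hrn h2r hI hC hg' hP'
          (a := r + q + 1) (b := r + (s + 1)) (by omega) (by omega) (by omega)
        refine ⟨g2, hG2, hP2, ?_, q + 1, by omega, fun d hd1 hd2 => ?_, fun d hd1 hd2 => ?_⟩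
        · rw [s3 r le_rfl (by omega) (by omega) (by omega), hc]
        · by_cases hd : d = r + q + 1
          · subst hd; rw [s1]; exact hb
          · rw [s3 d (by omega) (by omega) hd (by omega)]
            exact hgood d hd1 (by omega)
        · by_cases hd : d = r + (s + 1)
          · subst hd; rw [s2]; exact hbad _ (by omega) (by omega)
          · rw [s3 d (by omega) (by omega) (by omega) hd]
            exact hbad d (by omega) (by omega)

lemma caseB (hm : m = n * 2) (hr : 0 < r) (hrn : r < n) (h2r : n + 2 ≤ 2 * r)
    (hI : ∀ A ∈ 𝒜, ∀ B ∈ 𝒜, (A ∩ B).Nonempty)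
    (hC : ∀ g ∈ GG n m, (cnt r 𝒜 g).card = r) {D : Finset (ZMod m)} (hDA : D ∈ 𝒜)
    (hD : Set.InjOn (prt n) (D : Set (ZMod m))) {g : Equiv.Perm (ZMod m)} (hg : g ∈ GG n m)
    (hP : PP r 𝒜 g) : g (r : ZMod m) ∈ D := by
  by_contra h0
  obtain ⟨g', hg', hP', hc, q, hq, hgood, hbad⟩ :=
    sorted hm hr hrn h2r hI hC hg hP D (n - 1) (by omega)
  rw [← hc] at h0
  refine finish_k (by omega) hI hDA (hC _ hg') hP' (min r (q + 1)) (by omega) (by omega) ?_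
  intro x hx1 hx2
  rcases Nat.lt_trichotomy x r with h | h | h
  · intro hx
    have hb := hbad (x + n) (by omega) (by omega)
    have := hD hx hb ((hg' _ _).2 (by
      rw [prt_natCast hm, prt_natCast hm, Nat.add_mod_right]))
    exact cast_ne (by omega) (by omega) (g'.injective this)
  · subst h; exact h0
  · exact hgood x h (by omega)

lemma caseC (hm : m = n * 2) (hr : 3 ≤ r) (h2r : n + 1 = 2 * r)
    (hI : ∀ A ∈ 𝒜, ∀ B ∈ 𝒜, (A ∩ B).Nonempty)
    (hC : ∀ g ∈ GG n m, (cnt r 𝒜 g).card = r) {D : Finset (ZMod m)} (hDA : D ∈ 𝒜)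
    (hD : Set.InjOn (prt n) (D : Set (ZMod m))) {g : Equiv.Perm (ZMod m)} (hg : g ∈ GG n m)
    (hP : PP r 𝒜 g) : g (r : ZMod m) ∈ D := by
  by_contra h0
  obtain ⟨g', hg', hP', hc, hi⟩ := clear hm (by omega) (by omega) hD hg hP (r - 2) (by omega)
    (by omega)
  rw [← hc] at h0
  by_cases hb : g' ((r + (r - 1) : ℕ) : ZMod m) ∈ D
  · have s1 := rsw_Swp (r := r) hm g' (a := r + 1) (b := r + (r - 1)) (by omega) (by omega)
      (by omega)
    obtain ⟨hG1, hP1⟩ := move_right hm (by omega) (by omega) hI hC hg' hP' (a := r + 1)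
      (b := r + (r - 1)) (by omega) (by omega) (by omega)
    generalize g' * rsw m n (r + 1) (r + (r - 1)) = g1 at *
    obtain ⟨hG2, hP2⟩ := val_move hm hG1 hP1 (x := r + 1) (by omega) (by omega)
    have hb1 : g1 ((r + 1 : ℕ) : ZMod m) ∈ D := by rw [s1.1]; exact hb
    refine finish_r (by omega) (by omega) hI hDA (hC _ hG2) hP2 ?_ ?_
    · rw [Equiv.Perm.mul_apply, Equiv.swap_apply_of_ne_of_ne,
        s1.2.2 r le_rfl (by omega) (by omega) (by omega)]
      · exact h0
      · exact cast_ne (by omega) (by omega)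
      · exact cast_ne (by omega) (by omega)
    · intro i h1 h2
      rw [Equiv.Perm.mul_apply]
      by_cases hi1 : i = 1
      · subst hi1
        rw [Equiv.swap_apply_left]
        intro hb2
        have := hD hb1 hb2 ((hG1 _ _).2 (by
          rw [prt_natCast hm, prt_natCast hm, Nat.add_mod_right]))
        exact cast_ne (by omega) (by omega) (g1.injective this)
      · rw [Equiv.swap_apply_of_ne_of_ne]
        · by_cases hi2 : i = r - 1
          · subst hi2
            rw [s1.2.1]; exact hi 1 le_rfl (by omega)
          · rw [s1.2.2 (r + i) (by omega) (by omega) (by omega) (by omega)]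
            exact hi i h1 (by omega)
        · exact (cast_ne (by omega) (by omega)).symm
        · exact cast_ne (by omega) (by omega)
  · refine finish_r (by omega) (by omega) hI hDA (hC _ hg') hP' h0 fun i h1 h2 => ?_
    by_cases hi2 : i = r - 1
    · subst hi2; exact hb
    · exact hi i h1 (by omega)

end strict

lemma dec6 : ∀ k : ZMod 6,
    Disjoint ((Wd 6 2 k).image (Equiv.swap (2 : ZMod 6) 5)) {1, 2} ∨
    Disjoint ((Wd 6 2 k).image (Equiv.swap (2 : ZMod 6) 5)) {2, 3} ∨
    Disjoint ((Wd 6 2 k).image (Equiv.swap (2 : ZMod 6) 5)) {1, 3} := by decide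

lemma case6 {𝒜 : Finset (Finset (ZMod 6))}
    (hI : ∀ A ∈ 𝒜, ∀ B ∈ 𝒜, (A ∩ B).Nonempty)
    (hC : ∀ g ∈ GG 3 6, (cnt 2 𝒜 g).card = 2) {D : Finset (ZMod 6)} (hDA : D ∈ 𝒜)
    (hDc : D.card = 2) {g : Equiv.Perm (ZMod 6)} (hg : g ∈ GG 3 6)
    (hP : PP 2 𝒜 g) : g (2 : ZMod 6) ∈ D := by
  by_contra h0
  have w1 : Wd 6 2 ((1 : ℕ) : ZMod 6) = {1, 2} := by decide
  have w2 : Wd 6 2 ((2 : ℕ) : ZMod 6) = {2, 3} := by decide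
  have e1 := PP_all (by omega) hI (hC _ hg) hP 1 (by omega) (by omega)
  have e2 := PP_all (by omega) hI (hC _ hg) hP 2 (by omega) (by omega)
  rw [w1] at e1
  rw [w2] at e2
  have m1 : g 1 ∈ D := by
    obtain ⟨z, hz⟩ := hI _ e1 _ hDA
    simp only [Finset.mem_inter, Finset.image_insert, Finset.image_singleton, Finset.mem_insert,
      Finset.mem_singleton] at hz
    obtain ⟨rfl | rfl, h⟩ := hz
    · exact h
    · exact absurd h h0
  have m3 : g 3 ∈ D := by
    obtain ⟨z, hz⟩ := hI _ e2 _ hDA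
    simp only [Finset.mem_inter, Finset.image_insert, Finset.image_singleton, Finset.mem_insert,
      Finset.mem_singleton] at hz
    obtain ⟨rfl | rfl, h⟩ := hz
    · exact absurd h h0
    · exact h
  have hDe : Finset.image g {1, 3} = D := by
    apply Finset.eq_of_subset_of_card_le
    · intro z hz
      simp only [Finset.image_insert, Finset.image_singleton, Finset.mem_insert,
        Finset.mem_singleton] at hz
      rcases hz with rfl | rfl
      · exact m1
      · exact m3
    · rw [Finset.card_image_of_injective _ g.injective, hDc]; decide
  rw [← hDe] at hDA
  have hG : g * Equiv.swap (2 : ZMod 6) 5 ∈ GG 3 6 := mul_mem hg (swap_mem (by decide))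
  have hc := hC _ hG
  have hemp : cnt 2 𝒜 (g * Equiv.swap (2 : ZMod 6) 5) = ∅ := by
    rw [Finset.eq_empty_iff_forall_notMem]
    intro k hk
    rw [mem_cnt, img_mul] at hk
    have nd : ∀ B : Finset (ZMod 6), B.image g ∈ 𝒜 →
        ¬ Disjoint ((Wd 6 2 k).image (Equiv.swap (2 : ZMod 6) 5)) B := by
      intro B hB hdis
      have := hI _ hk _ hB
      rw [← Finset.image_inter _ _ g.injective, Finset.disjoint_iff_inter_eq_empty.1 hdis] at this
      simp at this
    rcases dec6 k with h | h | h
    · exact nd _ e1 h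
    · exact nd _ e2 h
    · exact nd _ hDA h
  rw [hemp] at hc
  simp at hc

theorem core_strict {n t m r : ℕ} [NeZero m] (hm : m = n * t) (ht : 2 ≤ t) (hr : 0 < r)
    (hrn : r ≤ n) (hne : ¬ (r = n ∧ t = 2)) {𝒜 : Finset (Finset (ZMod m))}
    (h𝒜 : ∀ A ∈ 𝒜, A.card = r ∧ Set.InjOn (prt n) (A : Set (ZMod m)))
    (hI : ∀ A ∈ 𝒜, ∀ B ∈ 𝒜, (A ∩ B).Nonempty)
    (hC : ∀ g ∈ GG n m, (cnt r 𝒜 g).card = r) : ∃ v, ∀ A ∈ 𝒜, v ∈ A := by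
  have hlt : 2 * r < m := by
    rcases Nat.eq_or_lt_of_le ht with h | h
    · subst h; omega
    · have : n * 3 ≤ n * t := Nat.mul_le_mul_left _ h
      omega
  obtain ⟨g, hg, hP⟩ := PP_exists hm hr hlt hC
  refine ⟨g (r : ZMod m), fun D hDA => ?_⟩
  obtain ⟨hDc, hD⟩ := h𝒜 D hDA
  by_cases hbig : n + 2 * r ≤ m
  · exact caseA hm hr hrn hlt hbig hI hC hDA hD hg hP
  have ht2 : t = 2 := by
    by_contra h
    have : n * 3 ≤ n * t := Nat.mul_le_mul_left _ (by omega)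
    omega
  subst ht2
  have hrn' : r < n := by omega
  by_cases h2r : n + 2 ≤ 2 * r
  · exact caseB hm hr hrn' h2r hI hC hDA hD hg hP
  by_cases h3 : 3 ≤ r
  · exact caseC hm h3 (by omega) hI hC hDA hD hg hP
  obtain rfl : r = 2 := by omega
  obtain rfl : n = 3 := by omega
  obtain rfl : m = 6 := by omega
  exact case6 hI hC hDA hDc hg hP

lemma mem_ekrStar' {U : Type*} [Fintype U] {G : SimpleGraph U} {r : ℕ} {v : U} {A : Finset U} :
    A ∈ ekrStar G r v ↔ A ∈ indepSetsSize G r ∧ v ∈ A := by simp [ekrStar]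

lemma pairwise_iff' {U : Type*} {𝒜 : Finset (Finset U)} :
    PairwiseIntersecting 𝒜 ↔ ∀ A ∈ 𝒜, ∀ B ∈ 𝒜, ∃ x, x ∈ A ∧ x ∈ B := by
  simp [PairwiseIntersecting, Finset.Nonempty]

lemma mem_indep_iff {n t m r : ℕ} [NeZero m] (hm : m = n * t) (A : Finset (Fin n × Fin t)) :
    A ∈ indepSetsSize (copies n (⊤ : SimpleGraph (Fin t))) r ↔
      ((eqv hm).symm.finsetCongr A).card = r ∧
        Set.InjOn (prt n) (((eqv hm).symm.finsetCongr A : Finset (ZMod m)) : Set (ZMod m)) := by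
  simp only [indepSetsSize, indepSets, Finset.mem_filter, Finset.mem_univ, true_and,
    Equiv.finsetCongr_apply, Finset.card_map]
  rw [and_comm]
  refine and_congr_right fun _ => ?_
  constructor
  · intro h x hx y hy hxy
    simp only [Finset.coe_map, Set.mem_image, Finset.mem_coe] at hx hy
    obtain ⟨a, ha, rfl⟩ := hx
    obtain ⟨b, hb, rfl⟩ := hy
    rw [prt_iff hm] at hxy
    simp only [Equiv.coe_toEmbedding, Equiv.apply_symm_apply] at hxy ⊢
    congr 1
    refine Prod.ext hxy ?_
    by_contra hne
    exact h a ha b hb ⟨hxy, hne⟩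
  · intro h a ha b hb hab
    have hab' : a.1 = b.1 ∧ a.2 ≠ b.2 := hab
    have := h (x₁ := (eqv hm).symm a) (x₂ := (eqv hm).symm b)
      (by simpa using ha) (by simpa using hb)
      (by rw [prt_iff hm]; simpa using hab'.1)
    have := (eqv hm).symm.injective this
    exact hab'.2 (by rw [this])

lemma transfer {n r t : ℕ} (hr : 0 < r) (ht : 2 ≤ t) (hrn : r ≤ n)
    {𝒜 : Finset (Finset (Fin n × Fin t))}
    (h𝒜 : 𝒜 ⊆ indepSetsSize (copies n (⊤ : SimpleGraph (Fin t))) r)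
    (hI : PairwiseIntersecting 𝒜) (v : Fin n × Fin t) :
    𝒜.card ≤ (ekrStar (copies n (⊤ : SimpleGraph (Fin t))) r v).card ∧
    (𝒜.card = (ekrStar (copies n (⊤ : SimpleGraph (Fin t))) r v).card → ¬ (r = n ∧ t = 2) →
      ∃ u, ∀ A ∈ 𝒜, u ∈ A) := by
  obtain ⟨m, hm⟩ : ∃ m, m = n * t := ⟨_, rfl⟩
  have : NeZero m := ⟨by rw [hm]; exact Nat.mul_ne_zero (by omega) (by omega)⟩
  set E : Finset (Fin n × Fin t) ≃ Finset (ZMod m) := (eqv hm).symm.finsetCongr with hE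
  have hmem : ∀ (x : Fin n × Fin t) (A : Finset (Fin n × Fin t)),
      (eqv hm).symm x ∈ E A ↔ x ∈ A := by
    intro x A; simp [hE]
  set 𝒜' := 𝒜.map E.toEmbedding with h𝒜'
  set 𝒮 := (ekrStar (copies n (⊤ : SimpleGraph (Fin t))) r v).map E.toEmbedding with h𝒮
  have p1 : ∀ A ∈ 𝒜', A.card = r ∧ Set.InjOn (prt n) (A : Set (ZMod m)) := by
    intro A hA
    rw [h𝒜', Finset.mem_map] at hA
    obtain ⟨B, hB, rfl⟩ := hA
    exact (mem_indep_iff hm B).1 (h𝒜 hB)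
  have p2 : ∀ A ∈ 𝒜', ∀ B ∈ 𝒜', (A ∩ B).Nonempty := by
    intro A hA B hB
    rw [h𝒜', Finset.mem_map] at hA hB
    obtain ⟨A, hA, rfl⟩ := hA
    obtain ⟨B, hB, rfl⟩ := hB
    obtain ⟨x, hx⟩ := pairwise_iff'.1 hI A hA B hB
    refine ⟨(eqv hm).symm x, ?_⟩
    rw [Finset.mem_inter]
    exact ⟨(hmem x A).2 hx.1, (hmem x B).2 hx.2⟩
  have p3 : ∀ A, A ∈ 𝒮 ↔ (A.card = r ∧ Set.InjOn (prt n) (A : Set (ZMod m))) ∧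
      (eqv hm).symm v ∈ A := by
    intro A
    obtain ⟨B, rfl⟩ := E.surjective A
    rw [hmem, ← mem_indep_iff hm B, h𝒮]
    simp [mem_ekrStar']
  obtain ⟨q1, q2⟩ := core_bound hm ht hrn 𝒜' 𝒮 _ p1 p2 p3
  rw [h𝒜', h𝒮, Finset.card_map, Finset.card_map] at q1 q2
  refine ⟨q1, fun heq hne => ?_⟩
  obtain ⟨u, hu⟩ := core_strict hm ht hr hrn hne p1 p2 (q2 heq)
  refine ⟨eqv hm u, fun A hA => ?_⟩
  rw [← hmem, Equiv.symm_apply_apply]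
  exact hu _ (Finset.mem_map_of_mem _ hA)

/-- Meyer; Deza–Frankl. The disjoint union of `n` copies of the
complete graph `K_t` (with `n ≥ r ≥ 1`, `t ≥ 2`) is `r`-EKR, and strictly `r`-EKR unless
`r = n` and `t = 2`. -/
theorem unionCompleteGraphs_EKR (n r t : ℕ) (hn : 0 < n) (hr : 0 < r) (ht : 2 ≤ t)
    (hrn : r ≤ n) :
    IsEKR (copies n (⊤ : SimpleGraph (Fin t))) r ∧
    (¬(r = n ∧ t = 2) → IsStrictEKR (copies n (⊤ : SimpleGraph (Fin t))) r) := by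
  have hE : IsEKR (copies n (⊤ : SimpleGraph (Fin t))) r := by
    intro 𝒜 h𝒜 hI
    exact ⟨(⟨0, hn⟩, ⟨0, by omega⟩), (transfer hr ht hrn h𝒜 hI _).1⟩
  refine ⟨hE, fun hne => ⟨hE, fun 𝒜 h𝒜 hI hmax => ?_⟩⟩
  have hstar : ∀ v, (ekrStar (copies n (⊤ : SimpleGraph (Fin t))) r v).card ≤ 𝒜.card := by
    intro v
    refine hmax _ (fun A hA => (mem_ekrStar'.1 hA).1) (pairwise_iff'.2 ?_)
    intro A hA B hB
    exact ⟨v, (mem_ekrStar'.1 hA).2, (mem_ekrStar'.1 hB).2⟩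
  have h0 := transfer hr ht hrn h𝒜 hI (⟨0, hn⟩, ⟨0, by omega⟩)
  obtain ⟨u, hu⟩ := h0.2 (le_antisymm h0.1 (hstar _)) hne
  refine ⟨u, Finset.eq_of_subset_of_card_le ?_ (hstar u)⟩
  intro A hA
  exact mem_ekrStar'.2 ⟨h𝒜 hA, hu A hA⟩
end

section
/- Let a and b be nonnegative integers with a ≥ b, and let A be a finite family of sets each of size a such that |A₁ ∩ A₂| ≥ b for all A₁, A₂ in A. Then |A| ≤ |∂_{a−b} A|, where for a nonnegative integer s the s-shadow ∂_s A is the family of all sets S of size s such that S ⊆ A₀ for some A₀ in A. -/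
open Finset

theorem katona_step2 {α : Type*} [DecidableEq α] (a s : ℕ) (hsa : s ≤ a)
    (𝒜 : Finset (Finset α)) (hsize : ∀ A ∈ 𝒜, A.card = a) (w : Finset α → ℚ)
    (h0 : ∀ S : Finset α, S.card = s → ∑ B ∈ 𝒜, w B * (if S ⊆ B then 1 else 0) = 0)
    (d : ℕ) : ∀ I : Finset α, I.card + d = s →
      ∑ B ∈ 𝒜, w B * (if I ⊆ B then 1 else 0) = 0 := by
  induction d with
  | zero => intro I hI; exact h0 I hI
  | succ d ih =>
    intro I hI
    have h1 : ∑ x ∈ (𝒜.sup id) \ I, ∑ B ∈ 𝒜, w B * (if insert x I ⊆ B then (1:ℚ) else 0) = 0 := by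
      apply Finset.sum_eq_zero
      intro x hx
      apply ih
      rw [Finset.card_insert_of_notMem (Finset.mem_sdiff.1 hx).2]
      omega
    rw [Finset.sum_comm] at h1
    have h2 : ∀ B ∈ 𝒜, ∑ x ∈ (𝒜.sup id) \ I, w B * (if insert x I ⊆ B then (1:ℚ) else 0)
        = ((a - I.card : ℕ) : ℚ) * (w B * (if I ⊆ B then 1 else 0)) := by
      intro B hB
      rw [← Finset.mul_sum]
      by_cases hIB : I ⊆ B
      · have hBU : B ⊆ 𝒜.sup id := Finset.le_sup (f := id) hB
        rw [if_pos hIB, Finset.sum_boole]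
        have : ((𝒜.sup id) \ I).filter (fun x => insert x I ⊆ B) = B \ I := by
          ext x
          simp only [Finset.mem_filter, Finset.mem_sdiff, Finset.insert_subset_iff]
          constructor
          · rintro ⟨⟨_, h⟩, h', _⟩; exact ⟨h', h⟩
          · rintro ⟨h, h'⟩; exact ⟨⟨hBU h, h'⟩, h, hIB⟩
        rw [this, Finset.card_sdiff_of_subset hIB, hsize B hB]
        ring
      · rw [if_neg hIB, Finset.sum_eq_zero]
        · ring
        · intro x _
          rw [if_neg]
          intro h
          exact hIB ((Finset.subset_insert _ _).trans h)
    rw [Finset.sum_congr rfl h2, ← Finset.mul_sum] at h1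
    rcases mul_eq_zero.1 h1 with h | h
    · exfalso
      have : a - I.card = 0 := by exact_mod_cast h
      omega
    · exact h

theorem katona_step3 {α : Type*} [DecidableEq α] (s b : ℕ)
    (𝒜 : Finset (Finset α)) (w : Finset α → ℚ) (A : Finset α)
    (hint : ∀ B ∈ 𝒜, b ≤ (A ∩ B).card)
    (h0 : ∀ I : Finset α, I.card ≤ s → ∑ B ∈ 𝒜, w B * (if I ⊆ B then 1 else 0) = 0)
    (j : ℕ) : j ≤ b → ∀ i ≤ s, ∑ B ∈ 𝒜, w B * (((A ∩ B).card - j).choose i : ℚ) = 0 := by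
  induction j with
  | zero =>
    intro _ i hi
    have h1 : ∑ I ∈ A.powersetCard i, ∑ B ∈ 𝒜, w B * (if I ⊆ B then (1:ℚ) else 0) = 0 := by
      apply Finset.sum_eq_zero
      intro I hI
      apply h0
      rw [(Finset.mem_powersetCard.1 hI).2]; exact hi
    rw [Finset.sum_comm] at h1
    rw [← h1]
    apply Finset.sum_congr rfl
    intro B _
    rw [← Finset.mul_sum, Finset.sum_boole]
    have : (A.powersetCard i).filter (fun I => I ⊆ B) = (A ∩ B).powersetCard i := by
      ext I
      simp only [Finset.mem_filter, Finset.mem_powersetCard, Finset.subset_inter_iff]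
      tauto
    rw [this, Finset.card_powersetCard, Nat.sub_zero]
  | succ j ih =>
    intro hj i
    induction i with
    | zero =>
      intro hi
      have := ih (by omega) 0 hi
      simpa using this
    | succ i ih' =>
      intro hi
      have e1 := ih (by omega) (i+1) hi
      have e2 := ih' (by omega)
      have : ∑ B ∈ 𝒜, w B * (((A ∩ B).card - j).choose (i+1) : ℚ)
          = ∑ B ∈ 𝒜, w B * (((A ∩ B).card - (j+1)).choose i : ℚ)
          + ∑ B ∈ 𝒜, w B * (((A ∩ B).card - (j+1)).choose (i+1) : ℚ) := by
        rw [← Finset.sum_add_distrib]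
        apply Finset.sum_congr rfl
        intro B hB
        have hb := hint B hB
        obtain ⟨m, hm⟩ : ∃ m, (A ∩ B).card = m + (j+1) := ⟨_, (Nat.sub_add_cancel (by omega)).symm⟩
        have h1 : (A ∩ B).card - j = m + 1 := by omega
        have h2 : (A ∩ B).card - (j+1) = m := by omega
        rw [h1, h2, Nat.choose_succ_succ]
        push_cast
        ring
      linarith

/-- Katona's shadow lemma. If `𝒜` is a finite family of `a`-sets whose
pairwise intersections all have size at least `b`, then `|𝒜| ≤ |∂_{a−b} 𝒜|`, where the
`s`-shadow `∂_s 𝒜` is the family of all `s`-sets contained in some member of `𝒜`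
(here realised as `𝒜.sup (fun A => A.powersetCard (a − b))`). -/
theorem katona_shadow {α : Type*} [DecidableEq α] (a b : ℕ) (hba : b ≤ a)
    (𝒜 : Finset (Finset α)) (hsize : ∀ A ∈ 𝒜, A.card = a)
    (hint : ∀ A₁ ∈ 𝒜, ∀ A₂ ∈ 𝒜, b ≤ (A₁ ∩ A₂).card) :
    𝒜.card ≤ (𝒜.sup fun A => Finset.powersetCard (a - b) A).card := by
  set T := 𝒜.sup fun A => Finset.powersetCard (a - b) A with hT
  let M : Matrix T 𝒜 ℚ := fun S B => if S.1 ⊆ B.1 then 1 else 0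
  have hinj : Function.Injective M.mulVecLin := by
    rw [← LinearMap.ker_eq_bot, LinearMap.ker_eq_bot']
    intro v hv
    let w : Finset α → ℚ := fun B => if h : B ∈ 𝒜 then v ⟨B, h⟩ else 0
    have hw : ∀ B : 𝒜, w B.1 = v B := by
      intro B
      simp [w]
    have h0 : ∀ S : Finset α, S.card = a - b →
        ∑ B ∈ 𝒜, w B * (if S ⊆ B then 1 else 0) = 0 := by
      intro S hS
      by_cases hST : S ∈ T
      · have := congrFun hv ⟨S, hST⟩
        rw [Matrix.mulVecLin_apply, Matrix.mulVec, dotProduct] at this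
        rw [← Finset.sum_coe_sort 𝒜]
        rw [Pi.zero_apply] at this
        refine Eq.trans ?_ this
        apply Finset.sum_congr rfl
        intro B _
        rw [hw B, mul_comm]
      · apply Finset.sum_eq_zero
        intro B hB
        rw [if_neg, mul_zero]
        intro h
        apply hST
        rw [hT, Finset.mem_sup]
        exact ⟨B, hB, Finset.mem_powersetCard.2 ⟨h, hS⟩⟩
    have h1 : ∀ I : Finset α, I.card ≤ a - b →
        ∑ B ∈ 𝒜, w B * (if I ⊆ B then 1 else 0) = 0 := fun I hI =>
      katona_step2 a (a - b) (Nat.sub_le _ _) 𝒜 hsize w h0 (a - b - I.card) I (by omega)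
    funext A
    have h2 := katona_step3 (a - b) b 𝒜 w A.1 (hint A.1 A.2) h1 b le_rfl (a - b) le_rfl
    rw [Finset.sum_eq_single A.1] at h2
    · rw [Finset.inter_self, hsize A.1 A.2, Nat.choose_self, hw] at h2
      simpa using h2
    · intro B hB hne
      rw [Nat.choose_eq_zero_of_lt, Nat.cast_zero, mul_zero]
      have hlt : (A.1 ∩ B).card < a := by
        rw [← hsize A.1 A.2]
        apply Finset.card_lt_card
        refine Finset.ssubset_iff_subset_ne.2 ⟨Finset.inter_subset_left, fun h => hne ?_⟩
        exact (Finset.eq_of_subset_of_card_le (Finset.inter_eq_left.1 h)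
          (by rw [hsize A.1 A.2, hsize B hB])).symm
      have := hint A.1 A.2 B hB
      omega
    · intro h; exact absurd A.2 h
  have := LinearMap.finrank_le_finrank_of_injective hinj
  simpa using this
end
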